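/- arXiv:2108.07723 — 3 statements merged into one kernel-verified Lean document; each statement's English description precedes it below -/
import Mathlib

section
/- Let p be an odd prime. Then the real numbers c_p := 2^{(p-1)/2}·per[cos(2πjk/p)]_{1≤j,k≤(p−1)/2} and c_p' := 2^{-(p-1)/2}·per[sec(2πjk/p)]_{1≤j,k≤(p−1)/2} are (rational) integers, and they satisfy c_p ≡ 2^{(p-1)/2}·((p−1)/2)! (mod p) and 2^{(p-1)/2}·c_p' ≡ ((p−1)/2)! (mod p); equivalently, per[cos(2πjk/p)]_{1≤j,k≤(p−1)/2} ≡ per[sec(2πjk/p)]_{1≤j,k≤(p−1)/2} ≡ ((p−1)/2)! (mod p). -/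
/-!
Put `n = (p - 1) / 2` and `ζ = exp (2πi/p)`. On nontrivial `p`-th roots of unity `x`, both
`x + x⁻¹` and `(x + x⁻¹)⁻¹` are values of integer polynomials `g`, namely `X + X ^ (p - 1)` and
`X * ∑_{i ≤ n} X ^ (4 i)`; hence the two numbers in question are `P(ζ)` for the integer
polynomial `P(X) = per [g (X ^ (j k))]`.

Since `g (x⁻¹) = g x` on `p`-th roots of unity, and multiplication by `a` prime to `p` permutes
`{1, …, n}` up to sign modulo `p`, it follows that `P(ζ ^ a) = P(ζ)` for all `1 ≤ a < p`. Orthogonality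
of the characters of `ℤ/p` gives `∑_{a < p} P(ζ ^ a) = p r` with `r` an integer, that is,
`P(1) + (p - 1) P(ζ) = p r`. So `P(ζ)` is rational, and being an algebraic integer it is an
integer; reducing modulo `p` then gives `P(ζ) ≡ P(1) = n! g(1) ^ n`.
-/

open Polynomial

/-- Orthogonality of characters of `ℤ/p`, summed over the coefficients of `P`. -/
lemma sum_aeval_pow_eq_prime_mul {p : ℕ} {ζ : ℂ} (hζ : IsPrimitiveRoot ζ p)
    (P : ℤ[X]) : ∃ r : ℤ, ∑ a ∈ Finset.range p, aeval (ζ ^ a) P = (p : ℂ) * r := by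
  induction P using Polynomial.induction_on' with
  | add P Q hP hQ =>
    obtain ⟨r, hr⟩ := hP
    obtain ⟨s, hs⟩ := hQ
    refine ⟨r + s, ?_⟩
    simp only [map_add, Finset.sum_add_distrib, hr, hs]
    push_cast
    ring
  | monomial m c =>
    have key : ∑ a ∈ Finset.range p, aeval (ζ ^ a) (monomial m c)
        = (c : ℂ) * ∑ a ∈ Finset.range p, (ζ ^ m) ^ a := by
      rw [Finset.mul_sum]
      refine Finset.sum_congr rfl fun a _ => ?_
      rw [aeval_monomial, ← pow_mul, ← pow_mul, mul_comm m a]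
      simp
    by_cases h : ζ ^ m = 1
    · refine ⟨c, ?_⟩
      rw [key, h]
      simp [mul_comm]
    · refine ⟨0, ?_⟩
      have h1 : (∑ a ∈ Finset.range p, (ζ ^ m) ^ a) * (ζ ^ m - 1) = 0 := by
        rw [geom_sum_mul, ← pow_mul, mul_comm, pow_mul, hζ.pow_eq_one, one_pow, sub_self]
      rw [key, (mul_eq_zero.mp h1).resolve_right (sub_ne_zero.mpr h)]
      simp

/-- `{±1, …, ±(p-1)/2}` represents every nonzero residue class modulo `p`. -/
lemma exists_fin_eq_or_eq_neg {p : ℕ} (hp : p.Prime) (hodd : Odd p) (x : ZMod p) (hx : x ≠ 0) :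
    ∃ i : Fin ((p - 1) / 2), (((i : ℕ) + 1 : ℕ) : ZMod p) = x ∨
      (((i : ℕ) + 1 : ℕ) : ZMod p) = -x := by
  have : Fact p.Prime := ⟨hp⟩
  have hlt : x.val < p := ZMod.val_lt x
  have hpos : x.val ≠ 0 := by rwa [Ne, ZMod.val_eq_zero]
  have hcast : ((x.val : ℕ) : ZMod p) = x := ZMod.natCast_zmod_val x
  obtain ⟨t, ht⟩ := hodd
  by_cases h : x.val ≤ t
  · refine ⟨⟨x.val - 1, by omega⟩, Or.inl ?_⟩
    refine Eq.trans (congrArg Nat.cast ?_) hcast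
    simp only
    omega
  · refine ⟨⟨p - x.val - 1, by omega⟩, Or.inr ?_⟩
    have h0 : ((p - x.val - 1 + 1 : ℕ) : ZMod p) + ((x.val : ℕ) : ZMod p) = 0 := by
      rw [← Nat.cast_add, ZMod.natCast_eq_zero_iff]
      exact dvd_of_eq (by omega)
    rw [hcast] at h0
    exact eq_neg_of_add_eq_zero_left h0

/-- Multiplication by a unit modulo `p` permutes `{1, …, (p-1)/2}` up to sign. -/
lemma exists_perm_eq_or_eq_neg {p : ℕ} (hp : p.Prime) (hodd : Odd p) (a : ℕ) (ha : ¬ p ∣ a) :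
    ∃ σ : Equiv.Perm (Fin ((p - 1) / 2)), ∀ j,
      (((σ j : ℕ) + 1 : ℕ) : ZMod p) = (a : ZMod p) * (((j : ℕ) + 1 : ℕ) : ZMod p) ∨
      (((σ j : ℕ) + 1 : ℕ) : ZMod p) = -((a : ZMod p) * (((j : ℕ) + 1 : ℕ) : ZMod p)) := by
  have : Fact p.Prime := ⟨hp⟩
  have ha0 : (a : ZMod p) ≠ 0 := by rwa [Ne, ZMod.natCast_eq_zero_iff]
  have hj0 : ∀ j : Fin ((p - 1) / 2), (((j : ℕ) + 1 : ℕ) : ZMod p) ≠ 0 := by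
    intro j h
    rw [ZMod.natCast_eq_zero_iff] at h
    have := Nat.le_of_dvd (by omega) h
    omega
  choose f hf using fun j : Fin ((p - 1) / 2) =>
    exists_fin_eq_or_eq_neg hp hodd _ (mul_ne_zero ha0 (hj0 j))
  have hinj : Function.Injective f := by
    intro i j hij
    have hi := hf i
    have hj := hf j
    rw [hij] at hi
    have h : (a : ZMod p) * ((((i : ℕ) + 1 : ℕ) : ZMod p) - (((j : ℕ) + 1 : ℕ) : ZMod p)) = 0 ∨
        (a : ZMod p) * ((((i : ℕ) + 1 : ℕ) : ZMod p) + (((j : ℕ) + 1 : ℕ) : ZMod p)) = 0 := by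
      rcases hi with hi | hi <;> rcases hj with hj | hj
      · left; linear_combination hj - hi
      · right; linear_combination hj - hi
      · right; linear_combination hi - hj
      · left; linear_combination hi - hj
    rcases h with h | h
    · have h := sub_eq_zero.mp ((mul_eq_zero.mp h).resolve_left ha0)
      rw [ZMod.natCast_eq_natCast_iff] at h
      have := Nat.ModEq.eq_of_lt_of_lt h (by omega) (by omega)
      ext; omega
    · have h := (mul_eq_zero.mp h).resolve_left ha0
      rw [← Nat.cast_add, ZMod.natCast_eq_zero_iff] at h
      have := Nat.le_of_dvd (by omega) h
      omega
  exact ⟨Equiv.ofBijective f (Finite.injective_iff_bijective.mp hinj), hf⟩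

/-- The integer polynomial `per [g (X ^ (j k))]` over `1 ≤ j, k ≤ n`. -/
noncomputable def perPoly (n : ℕ) (g : ℤ[X]) : ℤ[X] :=
  (Matrix.of fun j k : Fin n => g.comp (X ^ (((j : ℕ) + 1) * ((k : ℕ) + 1)))).permanent

lemma aeval_perPoly {A : Type*} [CommRing A] (n : ℕ) (g : ℤ[X]) (x : A) :
    aeval x (perPoly n g)
      = (Matrix.of fun j k : Fin n => aeval (x ^ (((j : ℕ) + 1) * ((k : ℕ) + 1))) g).permanent := by
  simp [perPoly, Matrix.permanent, map_sum, map_prod, aeval_comp]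

lemma aeval_one_perPoly {A : Type*} [CommRing A] (n : ℕ) (g : ℤ[X]) :
    aeval (1 : A) (perPoly n g) = (((n.factorial : ℤ) * g.eval 1 ^ n : ℤ) : A) := by
  have h : aeval (1 : A) g = ((g.eval 1 : ℤ) : A) := by
    simpa using aeval_algebraMap_apply A (1 : ℤ) g
  rw [aeval_perPoly]
  simp [Matrix.permanent, h, Fintype.card_perm]

/-- Galois invariance of `P(ζ)`, where `P = perPoly _ g`. -/
lemma aeval_pow_perPoly {p : ℕ} (hp : p.Prime) (hodd : Odd p) {ζ : ℂ} (hζ : IsPrimitiveRoot ζ p)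
    (g : ℤ[X]) (hg : ∀ x : ℂ, x ^ p = 1 → aeval x⁻¹ g = aeval x g) (a : ℕ) (ha : ¬ p ∣ a) :
    aeval (ζ ^ a) (perPoly ((p - 1) / 2) g) = aeval ζ (perPoly ((p - 1) / 2) g) := by
  obtain ⟨σ, hσ⟩ := exists_perm_eq_or_eq_neg hp hodd a ha
  rw [aeval_perPoly, aeval_perPoly]
  refine Eq.trans ?_ (Matrix.permanent_permute_cols σ _)
  congr 1
  ext j k
  simp only [Matrix.of_apply, Matrix.submatrix_apply, id_eq, ← pow_mul]
  rcases hσ j with h | h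
  · have h' : a * (((j : ℕ) + 1) * ((k : ℕ) + 1)) ≡ ((σ j : ℕ) + 1) * ((k : ℕ) + 1) [MOD p] := by
      rw [← ZMod.natCast_eq_natCast_iff, Nat.cast_mul, Nat.cast_mul, Nat.cast_mul, h, mul_assoc]
    rw [pow_eq_pow_of_modEq h' hζ.pow_eq_one]
  · have h' : p ∣ ((σ j : ℕ) + 1) * ((k : ℕ) + 1) + a * (((j : ℕ) + 1) * ((k : ℕ) + 1)) := by
      rw [← ZMod.natCast_eq_zero_iff, Nat.cast_add, Nat.cast_mul, Nat.cast_mul, Nat.cast_mul, h]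
      ring
    have h2 := (hζ.pow_eq_one_iff_dvd _).mpr h'
    rw [pow_add] at h2
    rw [eq_inv_of_mul_eq_one_left h2, hg]
    rw [← pow_mul, mul_comm, pow_mul, hζ.pow_eq_one, one_pow]

/-- `P(ζ)` is an integer congruent to `P(1)` modulo `p`, where `P = perPoly _ g`. -/
lemma exists_int_permanent {p : ℕ} (hp : p.Prime) (hodd : Odd p) {ζ : ℂ}
    (hζ : IsPrimitiveRoot ζ p) (g : ℤ[X])
    (hg : ∀ x : ℂ, x ^ p = 1 → aeval x⁻¹ g = aeval x g) :
    ∃ b : ℤ, (Matrix.of fun j k : Fin ((p - 1) / 2) =>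
        aeval (ζ ^ (((j : ℕ) + 1) * ((k : ℕ) + 1))) g).permanent = (b : ℂ) ∧
      b ≡ (((p - 1) / 2).factorial : ℤ) * g.eval 1 ^ ((p - 1) / 2) [ZMOD (p : ℤ)] := by
  rw [← aeval_perPoly]
  set P := perPoly ((p - 1) / 2) g with hP
  set e : ℤ := (((p - 1) / 2).factorial : ℤ) * g.eval 1 ^ ((p - 1) / 2) with he
  have hone : aeval (1 : ℂ) P = (e : ℂ) := aeval_one_perPoly _ g
  obtain ⟨r, hr⟩ := sum_aeval_pow_eq_prime_mul hζ P
  obtain ⟨q, rfl⟩ : ∃ q, p = q + 1 := ⟨p - 1, by have := hp.pos; omega⟩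
  have hsum : (q : ℂ) * aeval ζ P + e = ((q + 1 : ℕ) : ℂ) * r := by
    rw [← hr, Finset.sum_range_succ', pow_zero, hone]
    congr 1
    rw [Finset.sum_congr rfl fun a ha => aeval_pow_perPoly hp hodd hζ g hg (a + 1) ?_]
    · simp [hP]
    · intro hd
      have := Nat.le_of_dvd (by omega) hd
      have := Finset.mem_range.mp ha
      omega
  have hq : (q : ℂ) ≠ 0 := by
    have := hp.two_le
    exact_mod_cast (by omega : q ≠ 0)
  have hint : IsIntegral ℤ (aeval ζ P) := by
    have hζi : IsIntegral ℤ ζ := hζ.isIntegral hp.pos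
    rw [aeval_eq_sum_range]
    exact IsIntegral.sum _ fun i _ => (hζi.pow i).smul _
  have hrat : aeval ζ P = algebraMap ℚ ℂ ((((q + 1 : ℕ) : ℚ) * r - e) / q) := by
    simp only [eq_ratCast]
    push_cast
    rw [eq_div_iff hq]
    push_cast at hsum
    linear_combination hsum
  rw [hrat, isIntegral_algebraMap_iff (algebraMap ℚ ℂ).injective,
    IsIntegrallyClosed.isIntegral_iff] at hint
  obtain ⟨b, hb⟩ := hint
  have hbP : aeval ζ P = (b : ℂ) := by rw [hrat, ← hb]; simp
  refine ⟨b, hbP, ?_⟩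
  rw [hbP] at hsum
  have hZ : (q : ℤ) * b + e = ((q + 1 : ℕ) : ℤ) * r := by exact_mod_cast hsum
  rw [Int.modEq_iff_dvd]
  refine ⟨r - b, ?_⟩
  push_cast at hZ ⊢
  linear_combination hZ

/-- With `z = x⁴` one has `(1 + x²) ∑_{i ≤ t} zⁱ = (1 - z ^ (t + 1)) / (1 - x²) = 1`, because
`z ^ (t + 1) = x ^ (2 (2 t + 1) + 2) = x²`. -/
lemma mul_sum_pow_four_eq_inv {t : ℕ} {x : ℂ} (hx : x ^ (2 * t + 1) = 1) (hx1 : x ≠ 1) :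
    x * ∑ i ∈ Finset.range (t + 1), (x ^ 4) ^ i = (x + x⁻¹)⁻¹ := by
  have hx0 : x ≠ 0 := by
    rintro rfl
    simp at hx
  have hx2 : x ^ 2 - 1 ≠ 0 := by
    intro h
    apply hx1
    have h2 : x ^ 2 = 1 := sub_eq_zero.mp h
    rw [pow_succ, pow_mul, h2, one_pow, one_mul] at hx
    exact hx
  have hg := geom_sum_mul (x ^ 4) (t + 1)
  have h4 : (x ^ 4) ^ (t + 1) = x ^ 2 := by
    rw [← pow_mul, show 4 * (t + 1) = (2 * t + 1) * 2 + 2 by ring, pow_add, pow_mul, hx]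
    ring
  rw [h4] at hg
  refine eq_inv_of_mul_eq_one_left ?_
  apply mul_right_cancel₀ hx2
  linear_combination hg + (∑ i ∈ Finset.range (t + 1), (x ^ 4) ^ i) * (x ^ 2 - 1) *
    mul_inv_cancel₀ hx0

/-- Let `p` be an odd prime. Then `c_p := 2^((p-1)/2) * per [cos (2πjk/p)]_{1 ≤ j,k ≤ (p-1)/2}`
and `c_p' := 2^(-(p-1)/2) * per [sec (2πjk/p)]_{1 ≤ j,k ≤ (p-1)/2}` are rational integers
satisfying `c_p ≡ 2^((p-1)/2) * ((p-1)/2)! (mod p)` and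
`2^((p-1)/2) * c_p' ≡ ((p-1)/2)! (mod p)`. -/
theorem permanent_cos_sec_two_pi_mul_div_prime_mod (p : ℕ) (hp : p.Prime) (hodd : Odd p) :
    ∃ a b : ℤ,
      ((2 : ℝ) ^ ((p - 1) / 2) *
        (Matrix.of fun j k : Fin ((p - 1) / 2) =>
          Real.cos (2 * Real.pi * ((((j : ℕ) + 1) * ((k : ℕ) + 1) : ℕ) : ℝ) / (p : ℝ))).permanent
        = (a : ℝ)) ∧
      (((2 : ℝ) ^ ((p - 1) / 2))⁻¹ *
        (Matrix.of fun j k : Fin ((p - 1) / 2) =>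
          (Real.cos (2 * Real.pi * ((((j : ℕ) + 1) * ((k : ℕ) + 1) : ℕ) : ℝ) / (p : ℝ)))⁻¹).permanent
        = (b : ℝ)) ∧
      a ≡ 2 ^ ((p - 1) / 2) * (Nat.factorial ((p - 1) / 2) : ℤ) [ZMOD (p : ℤ)] ∧
      2 ^ ((p - 1) / 2) * b ≡ (Nat.factorial ((p - 1) / 2) : ℤ) [ZMOD (p : ℤ)] := by
  have hζ := Complex.isPrimitiveRoot_exp p hp.ne_zero
  set ζ : ℂ := Complex.exp (2 * Real.pi * Complex.I / p) with hζdef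
  obtain ⟨t, ht⟩ := id hodd
  have hn : (p - 1) / 2 = t := by omega
  have hcos : ∀ m : ℕ, ((2 * Real.cos (2 * Real.pi * (m : ℝ) / (p : ℝ)) : ℝ) : ℂ)
      = ζ ^ m + (ζ ^ m)⁻¹ := by
    intro m
    push_cast
    rw [Complex.two_cos, hζdef, ← Complex.exp_nat_mul, ← Complex.exp_neg]
    congr 2 <;> ring
  have hne : ∀ j k : Fin ((p - 1) / 2), ζ ^ (((j : ℕ) + 1) * ((k : ℕ) + 1)) ≠ 1 := by
    intro j k h
    rw [hζ.pow_eq_one_iff_dvd, hp.dvd_mul] at h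
    rcases h with h | h
    · have := Nat.le_of_dvd (by omega) h
      omega
    · have := Nat.le_of_dvd (by omega) h
      omega
  have hroot : ∀ m : ℕ, (ζ ^ m) ^ p = 1 := by
    intro m
    rw [← pow_mul, mul_comm, pow_mul, hζ.pow_eq_one, one_pow]
  have hg1 : ∀ x : ℂ, x ^ p = 1 → aeval x (X + X ^ (p - 1) : ℤ[X]) = x + x⁻¹ := by
    intro x hx
    have : x ^ (p - 1) * x = 1 := by rw [← pow_succ, Nat.sub_add_cancel hp.pos, hx]
    simp [eq_inv_of_mul_eq_one_left this]
  have hg2 : ∀ x : ℂ, x ^ p = 1 → x ≠ 1 →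
      aeval x (X * ∑ i ∈ Finset.range (t + 1), (X ^ 4) ^ i : ℤ[X]) = (x + x⁻¹)⁻¹ := by
    intro x hx hx1
    rw [← mul_sum_pow_four_eq_inv (ht ▸ hx) hx1]
    simp
  obtain ⟨a, ha, ha'⟩ := exists_int_permanent hp hodd hζ (X + X ^ (p - 1)) (by
    intro x hx
    rw [hg1 x hx, hg1 x⁻¹ (by rw [inv_pow, hx, inv_one]), inv_inv, add_comm])
  obtain ⟨b, hb, hb'⟩ := exists_int_permanent hp hodd hζ
    (X * ∑ i ∈ Finset.range (t + 1), (X ^ 4) ^ i) (by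
    intro x hx
    by_cases hx1 : x = 1
    · rw [hx1, inv_one]
    · rw [hg2 x hx hx1, hg2 x⁻¹ (by rw [inv_pow, hx, inv_one]) (by simpa using hx1), inv_inv,
        add_comm])
  refine ⟨a, b, ?_, ?_, ?_, ?_⟩
  · apply Complex.ofReal_injective
    rw [Complex.ofReal_intCast, ← ha]
    have h := Matrix.permanent_smul (Matrix.of fun j k : Fin ((p - 1) / 2) =>
      Real.cos (2 * Real.pi * ((((j : ℕ) + 1) * ((k : ℕ) + 1) : ℕ) : ℝ) / (p : ℝ))) (2 : ℝ)
    rw [Fintype.card_fin] at h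
    rw [← h, Matrix.permanent, Matrix.permanent, Complex.ofReal_sum]
    refine Finset.sum_congr rfl fun σ _ => ?_
    rw [Complex.ofReal_prod]
    refine Finset.prod_congr rfl fun i _ => ?_
    simp only [Matrix.smul_apply, Matrix.of_apply, smul_eq_mul]
    rw [hcos, hg1 _ (hroot _)]
  · apply Complex.ofReal_injective
    rw [Complex.ofReal_intCast, ← hb]
    have h := Matrix.permanent_smul (Matrix.of fun j k : Fin ((p - 1) / 2) =>
      (Real.cos (2 * Real.pi * ((((j : ℕ) + 1) * ((k : ℕ) + 1) : ℕ) : ℝ) / (p : ℝ)))⁻¹) (2⁻¹ : ℝ)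
    rw [Fintype.card_fin, inv_pow] at h
    rw [← h, Matrix.permanent, Matrix.permanent, Complex.ofReal_sum]
    refine Finset.sum_congr rfl fun σ _ => ?_
    rw [Complex.ofReal_prod]
    refine Finset.prod_congr rfl fun i _ => ?_
    simp only [Matrix.smul_apply, Matrix.of_apply, smul_eq_mul]
    rw [← mul_inv, Complex.ofReal_inv, hcos, hg2 _ (hroot _) (hne _ _)]
  · refine ha'.trans ?_
    rw [mul_comm]
    simp only [eval_add, eval_X, eval_pow, one_pow]
    rfl
  · refine (hb'.mul_left _).trans ?_
    have h1 : ((p : ℤ) + 1) ^ t ≡ 1 [ZMOD (p : ℤ)] := by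
      have h0 : (p : ℤ) + 1 ≡ 1 [ZMOD (p : ℤ)] := by simp [Int.ModEq]
      simpa using h0.pow t
    have h2 := h1.mul_left (t.factorial : ℤ)
    rw [mul_one] at h2
    rw [hn]
    convert h2 using 1
    have h3 : ((p : ℤ) + 1) = 2 * (t + 1) := by rw [ht]; push_cast; ring
    rw [h3, mul_pow]
    simp [eval_finsetSum]
    ring
end

section
/- For every odd integer n > 1, the real number s_n := (2^{(n-1)/2}/√n)·per[sin(2πjk/n)]_{1≤j,k≤(n−1)/2} is a (rational) integer, where the permanent is of the ((n−1)/2)×((n−1)/2) matrix with (j,k)-entry sin(2πjk/n). For every odd prime p, the real number s_p' := (√p/2^{(p-1)/2})·per[csc(2πjk/p)]_{1≤j,k≤(p−1)/2} is a (rational) integer, where csc(2πjk/p) = 1/sin(2πjk/p). Moreover, for every odd prime p these integers satisfy s_p ≡ (−1)^{(p+1)/2} (mod p) and s_p' ≡ 1 (mod p). -/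
/-!
Write `n = 2m + 1`, `ζ = exp (2πi/n)` and `H μ x = μ ^ x - μ ^ (-x)`, so that
`H ζ x = 2i sin (2πx/n)`. All the sines `sin (2πk/n)`, `1 ≤ k ≤ m`, are positive and
`∏ₖ 2 sin (2πk/n) = √n`; equivalently `∏ₖ H ζ k = i ^ m √n`. Hence
`s_n = ∑_σ ∏ₖ H ζ (σ(k) k) / H ζ k` and `s_p' = ∑_σ ∏ₖ H ζ k / H ζ (σ(k) k)`.

Each quotient `H μ (j k) / H μ k` is a polynomial in `μ` with integer coefficients whose value at
`μ = 1` is `j` (`aeval_quotPoly`, `eval_one_quotPoly`); for the second sum one uses an inverse `c`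
of `j` modulo `p` and `H μ k = H μ (c (j k))`. So both numbers are of the form `f(ζ)` with
`f ∈ ℤ[X]`. Replacing `ζ` by another primitive root `ζ ^ a` multiplies the rows of the
matrix by signs and permutes them (`exists_signed_perm`), which changes the permanent and
`∏ₖ H ζ k` by the same sign. Thus `f` takes the same value at all primitive `n`-th roots of unity,
so its remainder modulo the cyclotomic polynomial `Φ_n` is a constant `N ∈ ℤ` and `f(ζ) = N`
(`exists_int_of_const_on_primitiveRoots`).

For `n = p` prime, `Φ_p(1) = p` gives `N ≡ f(1) (mod p)`. Here `f(1) = (m!)²` in the first case,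
which is `(-1) ^ (m + 1)` by Wilson's theorem, and `f(1) = m! ∏ j⁻¹ = 1` in the second.
-/

open Polynomial Finset

namespace SinCscPermanent

/-! ### Integer polynomials constant on primitive roots -/

/-- An integer polynomial taking a constant value `s` on the primitive `n`-th roots of unity is
congruent to an integer constant modulo `Φ_n`: the remainder has degree `< φ(n)` but agrees with
the constant `s` at `φ(n)` points. -/
lemma exists_int_of_const_on_primitiveRoots {n : ℕ} (hn : n ≠ 0) (f : ℤ[X]) (s : ℂ)
    (h : ∀ μ : ℂ, IsPrimitiveRoot μ n → aeval μ f = s) :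
    ∃ N : ℤ, s = N ∧ cyclotomic n ℤ ∣ f - C N := by
  have hmon : (cyclotomic n ℤ).Monic := cyclotomic.monic n ℤ
  set r := f %ₘ cyclotomic n ℤ with hr
  have hdiv : r + cyclotomic n ℤ * (f /ₘ cyclotomic n ℤ) = f := modByMonic_add_div f _
  have hroot : ∀ μ : ℂ, IsPrimitiveRoot μ n → aeval μ (cyclotomic n ℤ) = 0 := by
    intro μ hμ
    have := hμ.isRoot_cyclotomic (Nat.pos_of_ne_zero hn)
    rw [IsRoot.def, ← map_cyclotomic_int, eval_map] at this
    exact this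
  have hval : ∀ μ : ℂ, IsPrimitiveRoot μ n → aeval μ r = s := by
    intro μ hμ
    rw [← h μ hμ]
    conv_rhs => rw [← hdiv]
    simp [hroot μ hμ]
  have hmap : r.map (Int.castRingHom ℂ) = C s := by
    have hcard : (primitiveRoots n ℂ).card = n.totient :=
      (Complex.isPrimitiveRoot_exp n hn).card_primitiveRoots
    have htot : 0 < n.totient := Nat.totient_pos.2 (Nat.pos_of_ne_zero hn)
    have hdeg : r.degree < (n.totient : WithBot ℕ) := by
      rw [← degree_cyclotomic n ℤ]
      exact degree_modByMonic_lt _ hmon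
    refine eq_of_degrees_lt_of_eval_finset_eq (primitiveRoots n ℂ) ?_ ?_ ?_
    · rw [hcard]
      exact lt_of_le_of_lt degree_map_le hdeg
    · rw [hcard]
      exact lt_of_le_of_lt degree_C_le (by exact_mod_cast htot)
    · intro μ hμ
      rw [mem_primitiveRoots (Nat.pos_of_ne_zero hn)] at hμ
      rw [eval_C, eval_map]
      exact hval μ hμ
  have hs : s = ((r.coeff 0 : ℤ) : ℂ) := by
    have := congrArg (fun q => q.coeff 0) hmap
    simpa using this.symm
  refine ⟨r.coeff 0, hs, ?_⟩
  have hrC : r = C (r.coeff 0) := by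
    apply map_injective (Int.castRingHom ℂ) Int.cast_injective
    rw [hmap, map_C, hs]
    rfl
  rw [← hrC]
  exact ⟨f /ₘ cyclotomic n ℤ, by linear_combination -hdiv⟩

/-! ### The function `H` and its quotients -/

/-- `H μ x = μ ^ x - μ ^ (-x)`, which is `2i sin (xθ)` for `μ = exp (iθ)`. -/
noncomputable def H (μ : ℂ) (x : ℤ) : ℂ := μ ^ x - μ ^ (-x)

lemma H_neg (μ : ℂ) (x : ℤ) : H μ (-x) = -H μ x := by simp [H]

lemma H_pow (μ : ℂ) (a : ℕ) (x : ℤ) : H (μ ^ a) x = H μ (a * x) := by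
  simp only [H, ← zpow_natCast, ← zpow_mul, mul_neg]

lemma H_congr {n : ℕ} {μ : ℂ} (hn : n ≠ 0) (hμ : μ ^ n = 1) {x y : ℤ} (h : (n : ℤ) ∣ x - y) :
    H μ x = H μ y := by
  have h0 : μ ≠ 0 := by
    rintro rfl
    simp [hn] at hμ
  obtain ⟨c, hc⟩ := h
  obtain rfl : x = y + n * c := by linarith
  have : μ ^ ((n : ℤ) * c) = 1 := by rw [zpow_mul, zpow_natCast, hμ, one_zpow]
  simp only [H, neg_add, zpow_add₀ h0, zpow_neg, this]
  simp

lemma H_ne_zero {n : ℕ} {μ : ℂ} (hodd : Odd n) (hμ : IsPrimitiveRoot μ n) {x : ℤ}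
    (hx : ¬ (n : ℤ) ∣ x) : H μ x ≠ 0 := by
  intro h
  have h0 : μ ≠ 0 := hμ.ne_zero (by rintro rfl; simp at hodd)
  apply hx
  have h2 : μ ^ (x * 2) = 1 := by
    rw [H, sub_eq_zero] at h
    rw [mul_two, zpow_add₀ h0]
    nth_rw 1 [h]
    rw [← zpow_add₀ h0]
    simp
  have h3 := (hμ.zpow_eq_one_iff_dvd _).1 h2
  refine IsCoprime.dvd_of_dvd_mul_right ?_ h3
  rw [show (2 : ℤ) = ((2 : ℕ) : ℤ) from rfl, Nat.isCoprime_iff_coprime]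
  exact (Nat.coprime_two_right).2 hodd

/-- An integer polynomial representing `H μ (j k) / H μ k` at the `n`-th roots of unity `μ`. The
factor `X ^ (n - 1)` stands for `μ⁻¹`. -/
noncomputable def quotPoly (n j k : ℕ) : ℤ[X] :=
  X ^ (k + (n - 1) * (j * k)) * ∑ l ∈ range j, (X ^ (2 * k)) ^ l

lemma eval_one_quotPoly (n j k : ℕ) : (quotPoly n j k).eval 1 = j := by
  simp [quotPoly, eval_finsetSum]

lemma aeval_quotPoly {n : ℕ} (hn : n ≠ 0) {μ : ℂ} (hμ : μ ^ n = 1) (j k : ℕ) :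
    aeval μ (quotPoly n j k) * H μ k = H μ ((j * k : ℕ) : ℤ) := by
  have h0 : μ ≠ 0 := by
    rintro rfl
    simp [hn] at hμ
  have hinv : μ ^ (n - 1) = μ⁻¹ := by
    apply eq_inv_of_mul_eq_one_left
    rw [← pow_succ, Nat.sub_add_cancel (Nat.pos_of_ne_zero hn), hμ]
  have hgeom := geom_sum_mul (μ ^ (2 * k)) j
  have hk : H μ k = (μ ^ k)⁻¹ * (μ ^ (2 * k) - 1) := by
    rw [H, zpow_neg, zpow_natCast, two_mul, pow_add]
    field_simp
  have hjk : H μ ((j * k : ℕ) : ℤ) = (μ ^ (j * k))⁻¹ * ((μ ^ (2 * k)) ^ j - 1) := by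
    rw [H, zpow_neg, zpow_natCast, ← pow_mul, show 2 * k * j = j * k + j * k by ring, pow_add]
    field_simp
  rw [hk, hjk, ← hgeom]
  simp only [quotPoly, map_mul, map_pow, map_sum, aeval_X]
  rw [pow_add, pow_mul μ (n - 1), hinv, inv_pow]
  field_simp

/-! ### Change of primitive root -/

/-- Multiplication by `a` coprime to `n = 2m + 1` acts on `{1, …, m}`, up to signs, as a
permutation. -/
lemma exists_signed_perm {m a : ℕ} (ha : a.Coprime (2 * m + 1)) :
    ∃ (π : Equiv.Perm (Fin m)) (ε : Fin m → ℤ), (∀ j, ε j = 1 ∨ ε j = -1) ∧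
      ∀ j : Fin m, ((2 * m + 1 : ℕ) : ℤ) ∣ a * ((j : ℕ) + 1 : ℤ) - ε j * ((π j : ℕ) + 1 : ℤ) := by
  have hcop : IsCoprime ((2 * m + 1 : ℕ) : ℤ) (a : ℤ) := (Nat.isCoprime_iff_coprime.2 ha).symm
  have hex : ∀ j : Fin m, ∃ (k : Fin m) (e : ℤ), (e = 1 ∨ e = -1) ∧
      ((2 * m + 1 : ℕ) : ℤ) ∣ a * ((j : ℕ) + 1 : ℤ) - e * ((k : ℕ) + 1 : ℤ) := by
    intro j
    have hj := j.2
    set r := (a * ((j : ℕ) + 1)) % (2 * m + 1) with hr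
    have hlt : r < 2 * m + 1 := Nat.mod_lt _ (by omega)
    have hne : r ≠ 0 := by
      intro h
      have h1 : 2 * m + 1 ∣ a * ((j : ℕ) + 1) := Nat.dvd_of_mod_eq_zero h
      have h2 := Nat.le_of_dvd (by omega) (ha.symm.dvd_of_dvd_mul_left h1)
      omega
    have hd : (a * ((j : ℕ) + 1 : ℤ)) =
        (2 * m + 1) * (((a * ((j : ℕ) + 1)) / (2 * m + 1) : ℕ) : ℤ) + r := by
      have := Nat.div_add_mod (a * ((j : ℕ) + 1)) (2 * m + 1)
      rw [← hr] at this
      exact_mod_cast this.symm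
    by_cases hrm : r ≤ m
    · refine ⟨⟨r - 1, by omega⟩, 1, Or.inl rfl,
        (((a * ((j : ℕ) + 1)) / (2 * m + 1) : ℕ) : ℤ), ?_⟩
      rw [hd]
      push_cast [Nat.one_le_iff_ne_zero.2 hne]
      ring
    · refine ⟨⟨2 * m - r, by omega⟩, -1, Or.inr rfl,
        (((a * ((j : ℕ) + 1)) / (2 * m + 1) : ℕ) : ℤ) + 1, ?_⟩
      rw [hd]
      push_cast [show r ≤ 2 * m by omega]
      ring
  choose k e he hk using hex
  have hinj : Function.Injective k := by
    intro i j hij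
    have hi := hk i
    have hj := hk j
    rw [hij] at hi
    have hb := i.2
    have hb2 := j.2
    -- `a (i+1) ≡ ± a (j+1)`, hence `i+1 ≡ ± (j+1)`, and both lie in `[1, m]`.
    have key : ((2 * m + 1 : ℕ) : ℤ) ∣ ((i : ℕ) + 1 : ℤ) - ((j : ℕ) + 1) ∨
        ((2 * m + 1 : ℕ) : ℤ) ∣ ((i : ℕ) + 1 : ℤ) + ((j : ℕ) + 1) := by
      rcases he i with h1 | h1 <;> rcases he j with h2 | h2 <;> rw [h1] at hi <;> rw [h2] at hj
      · left
        refine hcop.dvd_of_dvd_mul_left ?_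
        convert dvd_sub hi hj using 1; ring
      · right
        refine hcop.dvd_of_dvd_mul_left ?_
        convert dvd_add hi hj using 1; ring
      · right
        refine hcop.dvd_of_dvd_mul_left ?_
        convert dvd_add hi hj using 1; ring
      · left
        refine hcop.dvd_of_dvd_mul_left ?_
        convert dvd_sub hi hj using 1; ring
    apply Fin.ext
    rcases key with h | h
    · have := Int.eq_zero_of_abs_lt_dvd h (by rw [abs_lt]; push_cast; constructor <;> omega)
      omega
    · have := Int.le_of_dvd (by omega) h
      push_cast at this
      omega
  exact ⟨Equiv.ofBijective k (Finite.injective_iff_bijective.1 hinj), e, he, hk⟩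

/-- The product `∏ₖ H μ k` over `1 ≤ k ≤ m`. -/
noncomputable def prodH (m : ℕ) (μ : ℂ) : ℂ := ∏ i : Fin m, H μ ((i : ℕ) + 1 : ℤ)

/-- The permanent of `[H μ (j k)]` over `1 ≤ j, k ≤ m`. -/
noncomputable def perH (m : ℕ) (μ : ℂ) : ℂ :=
  (Matrix.of fun j k : Fin m => H μ (((j : ℕ) + 1 : ℤ) * ((k : ℕ) + 1))).permanent

/-- The permanent of `[1 / H μ (j k)]` over `1 ≤ j, k ≤ m`. -/
noncomputable def perInvH (m : ℕ) (μ : ℂ) : ℂ :=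
  (Matrix.of fun j k : Fin m => (H μ (((j : ℕ) + 1 : ℤ) * ((k : ℕ) + 1)))⁻¹).permanent

/-- Passing from `ζ` to another primitive root changes `prodH`, `perH` and `perInvH` by one and
the same sign. -/
lemma exists_common_sign {m : ℕ} {ζ μ : ℂ} (hζ : IsPrimitiveRoot ζ (2 * m + 1))
    (hμ : IsPrimitiveRoot μ (2 * m + 1)) :
    ∃ e : ℂ, (e = 1 ∨ e = -1) ∧ prodH m μ = e * prodH m ζ ∧ perH m μ = e * perH m ζ ∧
      perInvH m μ = e * perInvH m ζ := by
  obtain ⟨a, -, ha, rfl⟩ := hζ.isPrimitiveRoot_iff.1 hμ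
  obtain ⟨π, ε, hε, hd⟩ := exists_signed_perm ha
  have hH : ∀ (j : Fin m) (x : ℤ), H (ζ ^ a) (((j : ℕ) + 1 : ℤ) * x) =
      ε j * H ζ (((π j : ℕ) + 1 : ℤ) * x) := by
    intro j x
    have h1 : H (ζ ^ a) (((j : ℕ) + 1 : ℤ) * x) = H ζ (ε j * (((π j : ℕ) + 1 : ℤ) * x)) := by
      rw [H_pow]
      refine H_congr (by omega) hζ.pow_eq_one ?_
      obtain ⟨d, hd⟩ := hd j
      exact ⟨d * x, by linear_combination x * hd⟩
    rw [h1]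
    rcases hε j with h | h <;> simp [h, H_neg]
  have hinv : ∀ j, ((ε j : ℂ))⁻¹ = ε j := by
    intro j
    rcases hε j with h | h <;> simp [h]
  have hperm : ∀ (F : Fin m → Fin m → ℂ),
      (Matrix.of fun j k => (ε j : ℂ) * F (π j) k).permanent =
        (∏ j, (ε j : ℂ)) * (Matrix.of F).permanent := by
    intro F
    simp only [Matrix.permanent, Matrix.of_apply, prod_mul_distrib, mul_sum]
    refine Fintype.sum_equiv (Equiv.mulLeft π) _ _ fun σ => ?_
    rw [Equiv.prod_comp σ fun j => (ε j : ℂ)]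
    simp
  refine ⟨∏ j, (ε j : ℂ), ?_, ?_, ?_, ?_⟩
  · refine prod_induction _ (fun x : ℂ => x = 1 ∨ x = -1) ?_ (Or.inl rfl) ?_
    · rintro x y (rfl | rfl) (rfl | rfl) <;> simp
    · intro j _
      rcases hε j with h | h <;> simp [h]
  · have h1 := fun j => hH j 1
    simp only [mul_one] at h1
    simp only [prodH, h1, prod_mul_distrib]
    rw [Equiv.prod_comp π fun j => H ζ ((j : ℕ) + 1 : ℤ)]
  · simp only [perH, hH]
    exact hperm fun j k => H ζ (((j : ℕ) + 1 : ℤ) * ((k : ℕ) + 1))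
  · simp only [perInvH, hH, mul_inv, hinv]
    exact hperm fun j k => (H ζ (((j : ℕ) + 1 : ℤ) * ((k : ℕ) + 1)))⁻¹

/-! ### Integrality -/

lemma prodH_ne_zero {m : ℕ} {μ : ℂ} (hμ : IsPrimitiveRoot μ (2 * m + 1)) : prodH m μ ≠ 0 := by
  refine prod_ne_zero_iff.2 fun i _ => H_ne_zero (by simp) hμ fun h => ?_
  have := i.2
  have := Int.le_of_dvd (by omega) h
  push_cast at this
  omega

/-- The integer polynomial with value `s_n` at the primitive `n`-th roots of unity. -/
noncomputable def sinPoly (m : ℕ) : ℤ[X] :=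
  ∑ σ : Equiv.Perm (Fin m), ∏ i, quotPoly (2 * m + 1) ((σ i : ℕ) + 1) ((i : ℕ) + 1)

/-- The integer polynomial with value `s_p'` at the primitive `p`-th roots of unity, given inverses
`c j` of `j + 1` modulo `p = 2m + 1`. -/
noncomputable def cscPoly (m : ℕ) (c : Fin m → ℕ) : ℤ[X] :=
  ∑ σ : Equiv.Perm (Fin m), ∏ i,
    quotPoly (2 * m + 1) (c (σ i)) (((σ i : ℕ) + 1) * ((i : ℕ) + 1))

lemma aeval_sinPoly {m : ℕ} {μ : ℂ} (hμ : IsPrimitiveRoot μ (2 * m + 1)) :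
    aeval μ (sinPoly m) = perH m μ / prodH m μ := by
  rw [eq_div_iff (prodH_ne_zero hμ)]
  simp only [sinPoly, prodH, perH, Matrix.permanent, Matrix.of_apply, map_sum, map_prod, sum_mul,
    ← prod_mul_distrib]
  refine sum_congr rfl fun σ _ => prod_congr rfl fun i _ => ?_
  have := aeval_quotPoly (by omega) hμ.pow_eq_one ((σ i : ℕ) + 1) ((i : ℕ) + 1)
  exact_mod_cast this

lemma aeval_cscPoly {m : ℕ} {μ : ℂ} (hp : (2 * m + 1).Prime)
    (hμ : IsPrimitiveRoot μ (2 * m + 1)) {c : Fin m → ℕ}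
    (hc : ∀ j : Fin m, ((2 * m + 1 : ℕ) : ℤ) ∣ (c j : ℤ) * ((j : ℕ) + 1) - 1) :
    aeval μ (cscPoly m c) = perInvH m μ * prodH m μ := by
  simp only [cscPoly, prodH, perInvH, Matrix.permanent, Matrix.of_apply, map_sum, map_prod,
    sum_mul, ← prod_mul_distrib]
  refine sum_congr rfl fun σ _ => prod_congr rfl fun i _ => ?_
  have h := aeval_quotPoly (by omega) hμ.pow_eq_one (c (σ i)) (((σ i : ℕ) + 1) * ((i : ℕ) + 1))
  have hne : H μ (((σ i : ℕ) + 1 : ℤ) * ((i : ℕ) + 1)) ≠ 0 := by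
    refine H_ne_zero (by simp) hμ fun hd => ?_
    have hdN : 2 * m + 1 ∣ ((σ i : ℕ) + 1) * ((i : ℕ) + 1) := by exact_mod_cast hd
    have h1 := i.2
    have h2 := (σ i).2
    rcases hp.dvd_mul.1 hdN with h | h <;> have := Nat.le_of_dvd (by omega) h <;> omega
  rw [mul_comm _⁻¹, ← div_eq_mul_inv, eq_div_iff hne]
  push_cast at h
  rw [h]
  refine H_congr (n := 2 * m + 1) (by omega) hμ.pow_eq_one ?_
  obtain ⟨d, hd⟩ := hc (σ i)
  exact ⟨d * ((i : ℕ) + 1), by linear_combination ((i : ℕ) + 1 : ℤ) * hd⟩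

/-- Integrality of `s_n`, together with its congruence in polynomial form. -/
lemma exists_int_perH_div {m : ℕ} {ζ : ℂ} (hζ : IsPrimitiveRoot ζ (2 * m + 1)) :
    ∃ N : ℤ, perH m ζ / prodH m ζ = N ∧ cyclotomic (2 * m + 1) ℤ ∣ sinPoly m - C N := by
  refine exists_int_of_const_on_primitiveRoots (by omega) _ _ fun μ hμ => ?_
  rw [aeval_sinPoly hμ]
  obtain ⟨e, he, h1, h2, -⟩ := exists_common_sign hζ hμ
  rw [h1, h2]
  rcases he with rfl | rfl <;> simp

/-- Integrality of `s_p'`, together with its congruence in polynomial form. -/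
lemma exists_int_perInvH_mul {m : ℕ} {ζ : ℂ} (hp : (2 * m + 1).Prime)
    (hζ : IsPrimitiveRoot ζ (2 * m + 1)) {c : Fin m → ℕ}
    (hc : ∀ j : Fin m, ((2 * m + 1 : ℕ) : ℤ) ∣ (c j : ℤ) * ((j : ℕ) + 1) - 1) :
    ∃ N : ℤ, perInvH m ζ * prodH m ζ = N ∧ cyclotomic (2 * m + 1) ℤ ∣ cscPoly m c - C N := by
  refine exists_int_of_const_on_primitiveRoots (by omega) _ _ fun μ hμ => ?_
  rw [aeval_cscPoly hp hμ hc]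
  obtain ⟨e, he, h1, -, h2⟩ := exists_common_sign hζ hμ
  rw [h1, h2]
  rcases he with rfl | rfl <;> simp

/-! ### Congruences modulo a prime -/

lemma eval_one_modEq {p : ℕ} (hp : p.Prime) {f : ℤ[X]} {N : ℤ}
    (h : cyclotomic p ℤ ∣ f - C N) : ((f.eval 1 : ℤ) : ZMod p) = N := by
  have := Fact.mk hp
  have := eval_dvd (x := 1) h
  rw [eval_one_cyclotomic_prime, eval_sub, eval_C] at this
  exact ((ZMod.intCast_eq_intCast_iff_dvd_sub _ _ _).2 this).symm

lemma eval_one_sinPoly (m : ℕ) : (sinPoly m).eval 1 = (m.factorial : ℤ) ^ 2 := by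
  have h : ∀ σ : Equiv.Perm (Fin m),
      ∏ i, (((σ i : ℕ) + 1 : ℕ) : ℤ) = (m.factorial : ℤ) := by
    intro σ
    rw [Equiv.prod_comp σ fun j : Fin m => (((j : ℕ) + 1 : ℕ) : ℤ),
      Fin.prod_univ_eq_prod_range (fun j => ((j + 1 : ℕ) : ℤ)), ← prod_range_add_one_eq_factorial]
    push_cast
    rfl
  simp only [sinPoly, eval_finsetSum, eval_prod, eval_one_quotPoly, h]
  simp [Fintype.card_perm, sq]

lemma eval_one_cscPoly (m : ℕ) (c : Fin m → ℕ) :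
    (cscPoly m c).eval 1 = (m.factorial : ℤ) * ∏ j, (c j : ℤ) := by
  have h : ∀ σ : Equiv.Perm (Fin m), ∏ i, (c (σ i) : ℤ) = ∏ j, (c j : ℤ) :=
    fun σ => Equiv.prod_comp σ fun j => (c j : ℤ)
  simp only [cscPoly, eval_finsetSum, eval_prod, eval_one_quotPoly, h]
  simp [Fintype.card_perm]

/-- Wilson's theorem in the form `(m!)² = (-1) ^ (m + 1)` modulo the prime `2m + 1`. -/
lemma factorial_half_sq {m : ℕ} (hp : (2 * m + 1).Prime) :
    ((m.factorial : ZMod (2 * m + 1))) ^ 2 = (-1) ^ (m + 1) := by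
  have := Fact.mk hp
  have hw := ZMod.wilsons_lemma (2 * m + 1)
  rw [show 2 * m + 1 - 1 = m + m by omega, ← prod_range_add_one_eq_factorial,
    prod_range_add, prod_range_add_one_eq_factorial, ← prod_range_reflect] at hw
  have h : ((∏ j ∈ range m, (m + (m - 1 - j) + 1) : ℕ) : ZMod (2 * m + 1)) =
      (-1) ^ m * m.factorial := by
    rw [← prod_range_add_one_eq_factorial]
    push_cast
    have h1 : ∏ j ∈ range m, ((j : ZMod (2 * m + 1)) + 1) * (-1) =
        (∏ j ∈ range m, ((j : ZMod (2 * m + 1)) + 1)) * (-1) ^ m := by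
      rw [prod_mul_distrib]
      simp
    rw [mul_comm ((-1) ^ m), ← h1]
    refine prod_congr rfl fun j hj => ?_
    rw [mem_range] at hj
    have h2 : ((m + (m - 1 - j) + 1 + (j + 1) : ℕ) : ZMod (2 * m + 1)) = 0 := by
      rw [show m + (m - 1 - j) + 1 + (j + 1) = 2 * m + 1 by omega]
      exact ZMod.natCast_self _
    push_cast at h2
    linear_combination h2
  push_cast at hw h
  rw [h] at hw
  have hs : ((-1 : ZMod (2 * m + 1)) ^ m) ^ 2 = 1 := by
    rw [← pow_mul, pow_mul', neg_one_sq, one_pow]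
  linear_combination (-1) ^ m * hw - (m.factorial : ZMod (2 * m + 1)) ^ 2 * hs

lemma exists_inverses {m : ℕ} (hp : (2 * m + 1).Prime) :
    ∃ c : Fin m → ℕ, ∀ j : Fin m, ((2 * m + 1 : ℕ) : ℤ) ∣ (c j : ℤ) * ((j : ℕ) + 1) - 1 := by
  have := Fact.mk hp
  refine ⟨fun j => (((j : ℕ) + 1 : ℕ) : ZMod (2 * m + 1))⁻¹.val, fun j => ?_⟩
  have hne : (((j : ℕ) + 1 : ℕ) : ZMod (2 * m + 1)) ≠ 0 := by
    rw [Ne, ZMod.natCast_eq_zero_iff]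
    intro h
    have := Nat.le_of_dvd (by omega) h
    have := j.2
    omega
  rw [← ZMod.intCast_zmod_eq_zero_iff_dvd]
  have := inv_mul_cancel₀ hne
  push_cast at this ⊢
  rw [ZMod.natCast_val, ZMod.cast_id, this, sub_self]

lemma factorial_mul_prod_inverses {m : ℕ} {c : Fin m → ℕ}
    (hc : ∀ j : Fin m, ((2 * m + 1 : ℕ) : ℤ) ∣ (c j : ℤ) * ((j : ℕ) + 1) - 1) :
    (m.factorial : ZMod (2 * m + 1)) * ∏ j, (c j : ZMod (2 * m + 1)) = 1 := by
  have h : (m.factorial : ZMod (2 * m + 1)) =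
      ∏ j : Fin m, (((j : ℕ) : ZMod (2 * m + 1)) + 1) := by
    rw [Fin.prod_univ_eq_prod_range (fun j => (j : ZMod (2 * m + 1)) + 1),
      ← prod_range_add_one_eq_factorial]
    push_cast
    rfl
  rw [h, ← prod_mul_distrib]
  refine prod_eq_one fun j _ => ?_
  have := (ZMod.intCast_zmod_eq_zero_iff_dvd _ _).2 (hc j)
  push_cast at this
  linear_combination this

/-! ### Comparison with the real permanents -/

/-- The standard primitive root `exp (2πi/n)` for `n = 2m + 1`. -/
noncomputable def zeta (m : ℕ) : ℂ :=
  Complex.exp (2 * Real.pi * Complex.I / ((2 * m + 1 : ℕ) : ℂ))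

lemma zeta_primitive (m : ℕ) : IsPrimitiveRoot (zeta m) (2 * m + 1) :=
  Complex.isPrimitiveRoot_exp _ (by omega)

lemma H_zeta (m x : ℕ) : H (zeta m) x =
    2 * Complex.I * (Real.sin (2 * Real.pi * (x : ℝ) / ((2 * m + 1 : ℕ) : ℝ)) : ℝ) := by
  rw [H, zpow_neg, zpow_natCast, zeta, ← Complex.exp_nat_mul, ← Complex.exp_neg,
    Complex.ofReal_sin, Complex.sin]
  have h : ((x : ℂ) * (2 * Real.pi * Complex.I / ((2 * m + 1 : ℕ) : ℂ))) =
      ((2 * Real.pi * (x : ℝ) / ((2 * m + 1 : ℕ) : ℝ) : ℝ) : ℂ) * Complex.I := by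
    push_cast
    ring
  rw [h, neg_mul]
  linear_combination (Complex.exp (-(((2 * Real.pi * (x : ℝ) / ((2 * m + 1 : ℕ) : ℝ) : ℝ) : ℂ) *
    Complex.I)) - Complex.exp (((2 * Real.pi * (x : ℝ) / ((2 * m + 1 : ℕ) : ℝ) : ℝ) : ℂ) *
    Complex.I)) * (-Complex.I_mul_I)

/-- `H μ k` squared is `-(1 - ω ^ k)(1 - ω ^ (n - k))` for `ω = μ²`, again a primitive root. -/
lemma prodH_sq {m : ℕ} {μ : ℂ} (hμ : IsPrimitiveRoot μ (2 * m + 1)) :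
    prodH m μ ^ 2 = (-1) ^ m * ((2 * m + 1 : ℕ) : ℂ) := by
  have hω : IsPrimitiveRoot (μ ^ 2) (2 * m + 1) :=
    hμ.pow_of_coprime 2 ((Nat.coprime_two_left).2 (by simp))
  have h0 : μ ≠ 0 := hμ.ne_zero (by omega)
  have hone := hμ.pow_eq_one
  have horder := hω.prod_one_sub_pow_eq_order
  rw [two_mul, prod_range_add, ← prod_range_reflect (fun j => 1 - (μ ^ 2) ^ (m + j + 1)),
    ← prod_mul_distrib] at horder
  have hc : ((-1 : ℂ)) ^ m = ∏ j ∈ range m, (-1 : ℂ) := by simp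
  rw [prodH, Fin.prod_univ_eq_prod_range (fun i => H μ ((i : ℕ) + 1 : ℤ)), ← prod_pow]
  have hn : ((2 * m + 1 : ℕ) : ℂ) = ((m + m : ℕ) : ℂ) + 1 := by push_cast; ring
  rw [hn, ← horder, hc, ← prod_mul_distrib]
  refine prod_congr rfl fun j hj => ?_
  rw [mem_range] at hj
  have hpow : μ ^ (m + (m - 1 - j) + 1) = (μ ^ (j + 1))⁻¹ := by
    apply eq_inv_of_mul_eq_one_left
    rw [← pow_add,
      show m + (m - 1 - j) + 1 + (j + 1) = 2 * m + 1 by omega, hone]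
  have hH : H μ ((j : ℕ) + 1 : ℤ) = μ ^ (j + 1) - (μ ^ (j + 1))⁻¹ := by
    rw [H, zpow_neg]
    norm_cast
  rw [hH, ← pow_mul, ← pow_mul, mul_comm 2, mul_comm 2, pow_mul, pow_mul, hpow]
  have : μ ^ (j + 1) ≠ 0 := pow_ne_zero _ h0
  field_simp
  ring

lemma prodH_zeta (m : ℕ) :
    prodH m (zeta m) = Complex.I ^ m * (Real.sqrt ((2 * m + 1 : ℕ) : ℝ) : ℝ) := by
  set n : ℕ := 2 * m + 1 with hn
  set R : ℝ := ∏ i : Fin m, (2 * Real.sin (2 * Real.pi * (((i : ℕ) + 1 : ℕ) : ℝ) / (n : ℝ))) with hR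
  have hprod : prodH m (zeta m) = Complex.I ^ m * (R : ℂ) := by
    have h : ∀ i : Fin m, H (zeta m) ((i : ℕ) + 1 : ℤ) = Complex.I *
        ((2 * Real.sin (2 * Real.pi * (((i : ℕ) + 1 : ℕ) : ℝ) / (n : ℝ)) : ℝ) : ℂ) := by
      intro i
      have := H_zeta m ((i : ℕ) + 1)
      rw [Nat.cast_succ] at this
      rw [this, ← hn, Complex.ofReal_mul, Complex.ofReal_ofNat]
      ring
    rw [prodH, prod_congr rfl fun i _ => h i, prod_mul_distrib, hR, Complex.ofReal_prod]
    simp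
  have hpos : 0 ≤ R := by
    refine prod_nonneg fun i _ => mul_nonneg (by norm_num) ?_
    have hi := i.2
    have hn0 : (0 : ℝ) < n := by positivity
    apply Real.sin_nonneg_of_nonneg_of_le_pi
    · positivity
    · rw [div_le_iff₀ hn0]
      have : (2 : ℝ) * (((i : ℕ) + 1 : ℕ) : ℝ) ≤ n := by
        have : 2 * ((i : ℕ) + 1) ≤ n := by omega
        exact_mod_cast this
      nlinarith [Real.pi_pos]
  have hsq : R ^ 2 = n := by
    have h := prodH_sq (zeta_primitive m)
    rw [hprod, mul_pow, ← pow_mul, mul_comm m 2, pow_mul, Complex.I_sq] at h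
    have := mul_left_cancel₀ (pow_ne_zero m (by norm_num : (-1 : ℂ) ≠ 0)) h
    exact_mod_cast this
  rw [hprod, ← hsq, Real.sqrt_sq hpos]

lemma permanent_const_mul {m : ℕ} (c : ℂ) (F : Fin m → Fin m → ℝ) :
    (Matrix.of fun j k => c * (F j k : ℂ)).permanent =
      c ^ m * (((Matrix.of F).permanent : ℝ) : ℂ) := by
  simp only [Matrix.permanent, Matrix.of_apply, prod_mul_distrib, mul_sum, Complex.ofReal_sum,
    Complex.ofReal_prod]
  simp

lemma H_zeta_mul {m : ℕ} (j k : Fin m) : H (zeta m) (((j : ℕ) + 1 : ℤ) * ((k : ℕ) + 1)) =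
    2 * Complex.I * (Real.sin (2 * Real.pi * ((((j : ℕ) + 1) * ((k : ℕ) + 1) : ℕ) : ℝ) /
      ((2 * m + 1 : ℕ) : ℝ)) : ℝ) := by
  rw [← H_zeta]
  push_cast
  rfl

lemma sin_permanent_eq (m : ℕ) :
    (((2 : ℝ) ^ m / Real.sqrt ((2 * m + 1 : ℕ) : ℝ) *
      (Matrix.of fun j k : Fin m =>
        Real.sin (2 * Real.pi * ((((j : ℕ) + 1) * ((k : ℕ) + 1) : ℕ) : ℝ) /
          ((2 * m + 1 : ℕ) : ℝ))).permanent : ℝ) : ℂ) =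
      perH m (zeta m) / prodH m (zeta m) := by
  rw [prodH_zeta]
  simp only [perH, H_zeta_mul]
  rw [permanent_const_mul, mul_pow, Complex.ofReal_mul, Complex.ofReal_div, Complex.ofReal_pow,
    Complex.ofReal_ofNat]
  have hI : Complex.I ^ m ≠ 0 := pow_ne_zero _ Complex.I_ne_zero
  have hs : ((Real.sqrt ((2 * m + 1 : ℕ) : ℝ) : ℝ) : ℂ) ≠ 0 := by
    rw [Complex.ofReal_ne_zero]
    positivity
  field_simp

lemma csc_permanent_eq (m : ℕ) :
    ((Real.sqrt ((2 * m + 1 : ℕ) : ℝ) / (2 : ℝ) ^ m *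
      (Matrix.of fun j k : Fin m =>
        (Real.sin (2 * Real.pi * ((((j : ℕ) + 1) * ((k : ℕ) + 1) : ℕ) : ℝ) /
          ((2 * m + 1 : ℕ) : ℝ)))⁻¹).permanent : ℝ) : ℂ) =
      perInvH m (zeta m) * prodH m (zeta m) := by
  rw [prodH_zeta]
  simp only [perInvH, H_zeta_mul]
  simp only [mul_inv (2 * Complex.I), ← Complex.ofReal_inv]
  rw [permanent_const_mul, inv_pow, mul_pow, Complex.ofReal_mul, Complex.ofReal_div,
    Complex.ofReal_pow, Complex.ofReal_ofNat]
  have hI : Complex.I ^ m ≠ 0 := pow_ne_zero _ Complex.I_ne_zero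
  field_simp

end SinCscPermanent

open SinCscPermanent in
/-- For every odd `n > 1`, the real number
`s_n := (2^((n-1)/2) / √n) * per [sin (2πjk/n)]_{1 ≤ j,k ≤ (n-1)/2}` is a rational integer;
for every odd prime `p`, the real number
`s_p' := (√p / 2^((p-1)/2)) * per [csc (2πjk/p)]_{1 ≤ j,k ≤ (p-1)/2}` is a rational integer;
moreover for every odd prime `p` these integers satisfy
`s_p ≡ (-1)^((p+1)/2) (mod p)` and `s_p' ≡ 1 (mod p)`. -/
theorem permanent_sin_csc_two_pi_mul_div :
    (∀ n : ℕ, 1 < n → Odd n → ∃ m : ℤ,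
      (2 : ℝ) ^ ((n - 1) / 2) / Real.sqrt n *
        (Matrix.of fun j k : Fin ((n - 1) / 2) =>
          Real.sin (2 * Real.pi * ((((j : ℕ) + 1) * ((k : ℕ) + 1) : ℕ) : ℝ) / (n : ℝ))).permanent
        = (m : ℝ)) ∧
    (∀ p : ℕ, p.Prime → Odd p → ∃ m : ℤ,
      Real.sqrt p / (2 : ℝ) ^ ((p - 1) / 2) *
        (Matrix.of fun j k : Fin ((p - 1) / 2) =>
          (Real.sin (2 * Real.pi * ((((j : ℕ) + 1) * ((k : ℕ) + 1) : ℕ) : ℝ) / (p : ℝ)))⁻¹).permanent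
        = (m : ℝ)) ∧
    (∀ p : ℕ, p.Prime → Odd p → ∀ a b : ℤ,
      ((2 : ℝ) ^ ((p - 1) / 2) / Real.sqrt p *
        (Matrix.of fun j k : Fin ((p - 1) / 2) =>
          Real.sin (2 * Real.pi * ((((j : ℕ) + 1) * ((k : ℕ) + 1) : ℕ) : ℝ) / (p : ℝ))).permanent
        = (a : ℝ)) →
      (Real.sqrt p / (2 : ℝ) ^ ((p - 1) / 2) *
        (Matrix.of fun j k : Fin ((p - 1) / 2) =>
          (Real.sin (2 * Real.pi * ((((j : ℕ) + 1) * ((k : ℕ) + 1) : ℕ) : ℝ) / (p : ℝ)))⁻¹).permanent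
        = (b : ℝ)) →
      a ≡ (-1) ^ ((p + 1) / 2) [ZMOD (p : ℤ)] ∧ b ≡ 1 [ZMOD (p : ℤ)]) := by
  have hhalf : ∀ m : ℕ, (2 * m + 1 - 1) / 2 = m := fun m => by omega
  refine ⟨?_, ?_, ?_⟩
  · rintro n - ⟨m, rfl⟩
    obtain ⟨N, hN, -⟩ := exists_int_perH_div (zeta_primitive m)
    refine ⟨N, ?_⟩
    rw [hhalf]
    rw [← sin_permanent_eq] at hN
    exact_mod_cast hN
  · rintro p hp ⟨m, rfl⟩
    obtain ⟨c, hc⟩ := exists_inverses hp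
    obtain ⟨N, hN, -⟩ := exists_int_perInvH_mul hp (zeta_primitive m) hc
    refine ⟨N, ?_⟩
    rw [hhalf]
    rw [← csc_permanent_eq] at hN
    exact_mod_cast hN
  · rintro p hp ⟨m, rfl⟩ a b ha hb
    rw [hhalf] at ha hb
    obtain ⟨c, hc⟩ := exists_inverses hp
    obtain ⟨N, hN, hNd⟩ := exists_int_perH_div (zeta_primitive m)
    obtain ⟨M, hM, hMd⟩ := exists_int_perInvH_mul hp (zeta_primitive m) hc
    rw [← sin_permanent_eq, ha] at hN
    rw [← csc_permanent_eq, hb] at hM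
    obtain rfl : a = N := by exact_mod_cast hN
    obtain rfl : b = M := by exact_mod_cast hM
    have h1 := eval_one_modEq hp hNd
    have h2 := eval_one_modEq hp hMd
    rw [eval_one_sinPoly] at h1
    rw [eval_one_cscPoly] at h2
    push_cast at h1 h2
    rw [factorial_half_sq hp] at h1
    rw [factorial_mul_prod_inverses hc] at h2
    constructor
    · rw [← ZMod.intCast_eq_intCast_iff, show (2 * m + 1 + 1) / 2 = m + 1 by omega, ← h1]
      push_cast
      rfl
    · rw [← ZMod.intCast_eq_intCast_iff, ← h2]
      simp
end

section
/- For every odd integer n > 1, the real number t_n := (1/√n)·per[tan(πjk/n)]_{1≤j,k≤(n−1)/2} is a (rational) integer, where the permanent is of the ((n−1)/2)×((n−1)/2) matrix with (j,k)-entry tan(πjk/n). For every odd prime p, the real number t_p' := √p·per[cot(πjk/p)]_{1≤j,k≤(p−1)/2} is a (rational) integer. Moreover, for every odd prime p these integers satisfy t_p ≡ (−1)^{(p+1)/2} (mod p) and t_p' ≡ 1 (mod p). -/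
/-!
Write `n = 2m + 1`, let `ζ` be a primitive `n`-th root of unity, and put
`T(x) = (ζ^x - 1) / (ζ^x + 1)`, `s(x) = ζ^((m+1)x) - ζ^(mx)`, both odd functions of `x` mod `n`.
For `ζ = exp(2πi/n)` one has `T(x) = i tan(πx/n)` and `s(x) = (-1)^x 2i sin(πx/n)`, so that
`E = ∏_{j ≤ m} s(j)` equals `(-1)^(m(m+1)/2) i^m √n` (`sinProd_rootC`). Hence, up to the sign
`(-1)^(m(m+1)/2)`, the numbers in question are `per[T(jk)] / E` and `E * per[1/T(jk)]`.

*Integrality.* An automorphism `ζ ↦ ζ^a` replaces `jk` by `ajk`. Multiplication by `a` permutes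
`1, …, m` up to signs, so it multiplies `E`, `per[T(jk)]` and `per[1/T(jk)]` by the same sign
(`odd_sign`, `galois_sign`), and both combinations are Galois invariant, hence rational. They
are also permanents of matrices of algebraic integers: `T(jk) / s(j)` is a polynomial in `ζ`
(`tanQuot`), as is `s(j) / T(jk)` when `k` is invertible mod `n` (`cotQuot`). Rational algebraic
integers are integers.

*Congruences.* For `n = p` prime, every homomorphism from the ring of integers to a field of
characteristic `p` sends `ζ` to `1`, hence `T(jk) / s(j)` to `k (m+1) = k/2` and `s(j) / T(jk)`
to `2/k`. So the two integers are congruent to `m!² / 2^m` and `2^m`. Wilson's theorem gives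
`m!² ≡ (-1)^(m+1)`, and `2^m ≡ (-1)^(m(m+1)/2)` by the second supplementary law of quadratic
reciprocity.
-/

open Finset

/-! ### Quotient matrices with polynomial entries -/

/-- The matrix with entries `T(jk) / s(j)`, written as polynomials in the root of unity `z` of
order dividing `2m + 1`; indices of `Fin m` are shifted by one. -/
def tanQuot (m : ℕ) {R : Type*} [CommRing R] (z : R) : Matrix (Fin m) (Fin m) R :=
  Matrix.of fun j k =>
    z ^ ((m + 1) * ((j : ℕ) + 1)) * (∑ i ∈ range ((k : ℕ) + 1), z ^ (((j : ℕ) + 1) * i)) *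
      ∑ i ∈ range (m + 1), z ^ (2 * i * (((j : ℕ) + 1) * ((k : ℕ) + 1)))

/-- The matrix with entries `s(j) / T(jk)`, written as polynomials in the root of unity `z` of
order `2m + 1`; here `l k` is meant to be an inverse of `k + 1` modulo `2m + 1`. -/
def cotQuot (m : ℕ) (l : Fin m → ℕ) {R : Type*} [CommRing R] (z : R) :
    Matrix (Fin m) (Fin m) R :=
  Matrix.of fun j k =>
    z ^ (m * ((j : ℕ) + 1)) * (1 + z ^ (((j : ℕ) + 1) * ((k : ℕ) + 1))) *
      ∑ i ∈ range (l k), z ^ (((j : ℕ) + 1) * ((k : ℕ) + 1) * i)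

theorem map_permanent {R S : Type*} [CommRing R] [CommRing S] (f : R →+* S) {m : ℕ}
    (M : Matrix (Fin m) (Fin m) R) : f M.permanent = (M.map f).permanent := by
  simp [Matrix.permanent]

theorem map_tanQuot {R S : Type*} [CommRing R] [CommRing S] (f : R →+* S) (m : ℕ) (z : R) :
    (tanQuot m z).map f = tanQuot m (f z) := by
  ext j k; simp [tanQuot]

theorem map_cotQuot {R S : Type*} [CommRing R] [CommRing S] (f : R →+* S) (m : ℕ)
    (l : Fin m → ℕ) (z : R) : (cotQuot m l z).map f = cotQuot m l (f z) := by
  ext j k; simp [cotQuot]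

theorem permanent_row_scale {R : Type*} [CommRing R] {m : ℕ} (c : Fin m → R)
    (M : Matrix (Fin m) (Fin m) R) :
    (Matrix.of fun j k => c j * M j k).permanent = (∏ j, c j) * M.permanent := by
  simp only [Matrix.permanent, Matrix.of_apply, mul_sum, prod_mul_distrib]
  exact sum_congr rfl fun σ _ => by rw [Equiv.prod_comp σ c]

theorem permanent_col_only {R : Type*} [CommRing R] {m : ℕ} (c : Fin m → R) :
    (Matrix.of fun (_ : Fin m) k => c k).permanent = (m.factorial : R) * ∏ k, c k := by
  simp [Matrix.permanent, Fintype.card_perm]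

theorem prod_fin_succ_cast {R : Type*} [CommRing R] (m : ℕ) :
    ∏ k : Fin m, (((k : ℕ) : R) + 1) = (m.factorial : R) := by
  rw [Fin.prod_univ_eq_prod_range (fun k => ((k : ℕ) : R) + 1) m, ← prod_range_add_one_eq_factorial]
  push_cast
  rfl

theorem tanQuot_one_permanent {R : Type*} [CommRing R] (m : ℕ) :
    (tanQuot m (1 : R)).permanent =
      ((m.factorial * (m.factorial * (m + 1) ^ m) : ℕ) : R) := by
  have : tanQuot m (1 : R) = Matrix.of fun (_ : Fin m) (k : Fin m) =>
      (((k : ℕ) : R) + 1) * ((m : R) + 1) := by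
    ext j k; simp [tanQuot]
  rw [this, permanent_col_only, prod_mul_distrib, prod_fin_succ_cast]
  simp

theorem cotQuot_one_permanent {R : Type*} [CommRing R] (m : ℕ) (l : Fin m → ℕ) :
    (cotQuot m l (1 : R)).permanent = ((m.factorial * (2 ^ m * ∏ k, l k) : ℕ) : R) := by
  have : cotQuot m l (1 : R) = Matrix.of fun (_ : Fin m) (k : Fin m) => 2 * (l k : R) := by
    ext j k; simp [cotQuot]; norm_num
  rw [this, permanent_col_only, prod_mul_distrib]
  simp

/-! ### Odd functions modulo `2m + 1` -/

/-- Multiplication by a unit `a` of `ZMod (2m + 1)` permutes `1, …, m` up to signs `e`. -/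
theorem half_system (m : ℕ) (a : (ZMod (2 * m + 1))ˣ) :
    ∃ (π : Equiv.Perm (Fin m)) (e : Fin m → ℤ), ∀ j : Fin m,
      ((a : ZMod (2 * m + 1)) * ((j : ℕ) + 1) = ((π j : ℕ) + 1) ∧ e j = 1) ∨
      ((a : ZMod (2 * m + 1)) * ((j : ℕ) + 1) = -((π j : ℕ) + 1) ∧ e j = -1) := by
  have hne : ∀ j : Fin m, ((a : ZMod (2 * m + 1)) * ((j : ℕ) + 1) : ZMod (2 * m + 1)).valMinAbs.natAbs ≠ 0 := by
    intro j h
    rw [Int.natAbs_eq_zero, ZMod.valMinAbs_eq_zero, Units.mul_right_eq_zero] at h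
    have h' : (((j : ℕ) + 1 : ℕ) : ZMod (2 * m + 1)) = 0 := by exact_mod_cast h
    rw [ZMod.natCast_eq_zero_iff] at h'
    have := Nat.le_of_dvd (by omega) h'
    omega
  have hle : ∀ j : Fin m, ((a : ZMod (2 * m + 1)) * ((j : ℕ) + 1) : ZMod (2 * m + 1)).valMinAbs.natAbs ≤ m := by
    intro j
    have := ZMod.natAbs_valMinAbs_le
      ((a : ZMod (2 * m + 1)) * ((j : ℕ) + 1) : ZMod (2 * m + 1))
    omega
  let f : Fin m → Fin m := fun j =>
    ⟨((a : ZMod (2 * m + 1)) * ((j : ℕ) + 1) : ZMod (2 * m + 1)).valMinAbs.natAbs - 1, by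
      have := hne j; have := hle j; omega⟩
  have hf : ∀ j : Fin m, ((f j : ℕ) + 1) = ((a : ZMod (2 * m + 1)) * ((j : ℕ) + 1) : ZMod (2 * m + 1)).valMinAbs.natAbs := by
    intro j; have := hne j; simp only [f]; omega
  have key : ∀ j : Fin m, (a : ZMod (2 * m + 1)) * ((j : ℕ) + 1) = ((f j : ℕ) + 1) ∨
      (a : ZMod (2 * m + 1)) * ((j : ℕ) + 1) = -((f j : ℕ) + 1) := by
    intro j
    have h1 := ZMod.coe_valMinAbs
      ((a : ZMod (2 * m + 1)) * ((j : ℕ) + 1) : ZMod (2 * m + 1))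
    have h2 : (((f j : ℕ) : ZMod (2 * m + 1)) + 1) =
        ((((a : ZMod (2 * m + 1)) * ((j : ℕ) + 1) : ZMod (2 * m + 1)).valMinAbs.natAbs : ℕ) : ZMod (2 * m + 1)) := by
      rw [← hf j]; push_cast; rfl
    rw [h2]
    rcases Int.natAbs_eq ((a : ZMod (2 * m + 1)) * ((j : ℕ) + 1) : ZMod (2 * m + 1)).valMinAbs with h | h
    · left
      conv_lhs => rw [← h1, h]
      simp only [Int.cast_natCast]
    · right
      conv_lhs => rw [← h1, h]
      simp only [Int.cast_neg, Int.cast_natCast]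
  have hinj : Function.Injective f := by
    intro j k hjk
    have h : (a : ZMod (2 * m + 1)) * ((j : ℕ) + 1) = a * ((k : ℕ) + 1) ∨
        (a : ZMod (2 * m + 1)) * ((j : ℕ) + 1) = a * -((k : ℕ) + 1) := by
      rw [mul_neg]
      rcases key j with h1 | h1 <;> rcases key k with h2 | h2 <;> rw [h1, h2, hjk] <;> simp
    rw [Units.mul_right_inj, Units.mul_right_inj] at h
    rcases h with h | h
    · have h' : (((j : ℕ) : ℕ) : ZMod (2 * m + 1)) = ((k : ℕ) : ℕ) := by simpa using h
      rw [ZMod.natCast_eq_natCast_iff] at h'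
      exact Fin.ext (Nat.ModEq.eq_of_lt_of_lt h' (by omega) (by omega))
    · exfalso
      have h' : (((j : ℕ) + 1 + ((k : ℕ) + 1) : ℕ) : ZMod (2 * m + 1)) = 0 := by
        push_cast; rw [h]; ring
      rw [ZMod.natCast_eq_zero_iff] at h'
      have := Nat.le_of_dvd (by omega) h'
      omega
  classical
  refine ⟨Equiv.ofBijective f (Finite.injective_iff_bijective.mp hinj),
    fun j => if (a : ZMod (2 * m + 1)) * ((j : ℕ) + 1) = ((f j : ℕ) + 1) then 1 else -1, ?_⟩
  intro j
  by_cases h : (a : ZMod (2 * m + 1)) * ((j : ℕ) + 1) = ((f j : ℕ) + 1)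
  · left; exact ⟨h, if_pos h⟩
  · right; exact ⟨(key j).resolve_left h, if_neg h⟩

/-- The sign `ε` attached to `a` is the same for all odd functions `F`, and for products and
permanents alike. -/
theorem odd_sign {K : Type*} [Field K] (m : ℕ) (a : (ZMod (2 * m + 1))ˣ) :
    ∃ ε : K, ε * ε = 1 ∧ ∀ F : ZMod (2 * m + 1) → K, (∀ x, F (-x) = -F x) →
      (∏ j : Fin m, F (a * ((j : ℕ) + 1)) = ε * ∏ j : Fin m, F ((j : ℕ) + 1)) ∧
      (Matrix.of fun j k : Fin m => F (a * (((j : ℕ) + 1) * ((k : ℕ) + 1)))).permanent =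
        ε * (Matrix.of fun j k : Fin m => F (((j : ℕ) + 1) * ((k : ℕ) + 1))).permanent := by
  obtain ⟨π, e, h⟩ := half_system m a
  have hF : ∀ F : ZMod (2 * m + 1) → K, (∀ x, F (-x) = -F x) → ∀ (j : Fin m) y,
      F (a * ((j : ℕ) + 1) * y) = (e j : K) * F (((π j : ℕ) + 1) * y) := by
    intro F odd j y
    rcases h j with ⟨h1, h2⟩ | ⟨h1, h2⟩ <;> rw [h1, h2]
    · simp
    · rw [neg_mul, odd]; simp
  refine ⟨∏ j, (e j : K), ?_, fun F odd => ⟨?_, ?_⟩⟩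
  · rw [← prod_mul_distrib]
    refine prod_eq_one fun j _ => ?_
    rcases h j with ⟨_, h2⟩ | ⟨_, h2⟩ <;> simp [h2]
  · have := fun j => hF F odd j 1
    simp only [mul_one] at this
    simp only [this, prod_mul_distrib]
    rw [Equiv.prod_comp π fun j => F ((j : ℕ) + 1)]
  · simp only [← mul_assoc, hF F odd]
    rw [← Matrix.permanent_permute_cols π
      (Matrix.of fun j k : Fin m => F (((j : ℕ) + 1) * ((k : ℕ) + 1))), ← permanent_row_scale]
    rfl

/-! ### Rationality and reduction in number fields -/

theorem integral_fixed {K : Type*} [Field K] [NumberField K] [IsGalois ℚ K] (x : K)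
    (hx : IsIntegral ℤ x) (hfix : ∀ σ : Gal(K/ℚ), σ x = x) : ∃ z : ℤ, x = z := by
  obtain ⟨q, rfl⟩ := (IsGalois.mem_range_algebraMap_iff_fixed x).mpr hfix
  rw [isIntegral_algebraMap_iff (algebraMap ℚ K).injective] at hx
  obtain ⟨z, rfl⟩ := IsIntegrallyClosed.isIntegral_iff.mp hx
  exact ⟨z, by simp⟩

theorem exists_reduction (K : Type) [Field K] [NumberField K] (p : ℕ) [hp : Fact p.Prime] :
    ∃ (κ : Type) (_ : Field κ) (_ : CharP κ p),
      Nonempty (NumberField.RingOfIntegers K →+* κ) := by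
  have hmax : (Ideal.span {(p : ℤ)}).IsMaximal :=
    Int.ideal_span_isMaximal_of_prime p
  obtain ⟨Q, hQ, hlie⟩ := Ideal.exists_maximal_ideal_liesOver_of_isIntegral
    (S := NumberField.RingOfIntegers K) (Ideal.span {(p : ℤ)})
  let _ := Ideal.Quotient.field Q
  refine ⟨NumberField.RingOfIntegers K ⧸ Q, inferInstance, ?_, ⟨Ideal.Quotient.mk Q⟩⟩
  have h0 : ((p : ℕ) : NumberField.RingOfIntegers K ⧸ Q) = 0 := by
    have : (p : ℤ) ∈ Q.under ℤ := by
      rw [← hlie.over]; exact Ideal.mem_span_singleton_self _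
    rw [Ideal.under_def, Ideal.mem_comap] at this
    have := Ideal.Quotient.eq_zero_iff_mem.mpr this
    simpa using this
  exact ringChar.of_eq (CharP.ringChar_of_prime_eq_zero hp.out h0)

/-! ### The half-sine product and the tangent and cotangent matrices -/

/-- The product `E = ∏ s(j)` over `1 ≤ j ≤ m`, where `s(x) = z^((m+1)x) - z^(mx)`. -/
def sinProd (m : ℕ) {R : Type*} [CommRing R] (z : R) : R :=
  ∏ j : Fin m, (z ^ ((m + 1) * ((j : ℕ) + 1)) - z ^ (m * ((j : ℕ) + 1)))

/-- The matrix of `T(jk) = (z^(jk) - 1) / (z^(jk) + 1)`, with indices of `Fin m` shifted by one. -/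
def tanMat (m : ℕ) {K : Type*} [Field K] (z : K) : Matrix (Fin m) (Fin m) K :=
  Matrix.of fun j k => (z ^ (((j : ℕ) + 1) * ((k : ℕ) + 1)) - 1) /
    (z ^ (((j : ℕ) + 1) * ((k : ℕ) + 1)) + 1)

/-- The matrix of `1 / T(jk)`, with indices of `Fin m` shifted by one. -/
def cotMat (m : ℕ) {K : Type*} [Field K] (z : K) : Matrix (Fin m) (Fin m) K :=
  Matrix.of fun j k => (z ^ (((j : ℕ) + 1) * ((k : ℕ) + 1)) + 1) /
    (z ^ (((j : ℕ) + 1) * ((k : ℕ) + 1)) - 1)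

theorem add_one_ne_zero_of_pow {K : Type*} [Field K] [CharZero K] {m : ℕ} {v : K}
    (hv : v ^ (2 * m + 1) = 1) : v + 1 ≠ 0 := by
  intro h
  rw [eq_neg_of_add_eq_zero_left h, Odd.neg_one_pow ⟨m, rfl⟩] at hv
  norm_num at hv

theorem tanMat_permanent {K : Type*} [Field K] [CharZero K] {m : ℕ} {z : K}
    (hz : z ^ (2 * m + 1) = 1) :
    (tanMat m z).permanent = sinProd m z * (tanQuot m z).permanent := by
  rw [sinProd, ← permanent_row_scale]
  congr 1
  ext j k
  simp only [tanMat, tanQuot, Matrix.of_apply]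
  have hw : (z ^ ((j : ℕ) + 1)) ^ (2 * m + 1) = 1 := by rw [← pow_mul', pow_mul, hz, one_pow]
  simp only [mul_comm (m + 1), mul_comm m, mul_comm (2 * _), pow_mul]
  set w := z ^ ((j : ℕ) + 1)
  have hv : (w ^ ((k : ℕ) + 1)) ^ (2 * m + 1) = 1 := by rw [← pow_mul', pow_mul, hw, one_pow]
  have g1 := mul_geom_sum w ((k : ℕ) + 1)
  set v := w ^ ((k : ℕ) + 1)
  have g2 := mul_geom_sum (v ^ 2) (m + 1)
  rw [div_eq_iff (add_one_ne_zero_of_pow hv)]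
  -- Three cancellations: `s(j) w^(m+1) = w - 1`, `(w - 1) ∑ w^i = v - 1`, and
  -- `(v - 1)(v + 1) ∑ v^(2i) = v^(2m+2) - 1 = v - 1`.
  have e1 : (w ^ (m + 1) - w ^ m) * w ^ (m + 1) = w - 1 := by
    linear_combination (w - 1) * hw
  have e2 : (v ^ 2) ^ (m + 1) = v := by linear_combination v * hv
  rw [e2] at g2
  linear_combination -(∑ i ∈ range ((k : ℕ) + 1), w ^ i) * (∑ i ∈ range (m + 1), (v ^ 2) ^ i) * (v + 1) * e1
    - (∑ i ∈ range (m + 1), (v ^ 2) ^ i) * (v + 1) * g1 - g2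

theorem cotMat_permanent {K : Type*} [Field K] {m : ℕ} {z : K}
    (hz : IsPrimitiveRoot z (2 * m + 1)) (l : Fin m → ℕ)
    (hl : ∀ k : Fin m, ((k : ℕ) + 1) * l k ≡ 1 [MOD (2 * m + 1)]) :
    sinProd m z * (cotMat m z).permanent = (cotQuot m l z).permanent := by
  rw [sinProd, ← permanent_row_scale]
  congr 1
  ext j k
  simp only [cotMat, cotQuot, Matrix.of_apply]
  have hw : (z ^ ((j : ℕ) + 1)) ≠ 1 := by
    rw [Ne, hz.pow_eq_one_iff_dvd]
    intro h
    have := Nat.le_of_dvd (by omega) h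
    omega
  have hvl : ((z ^ ((j : ℕ) + 1)) ^ ((k : ℕ) + 1)) ^ l k = z ^ ((j : ℕ) + 1) := by
    rw [← pow_mul, ← pow_mul, ← pow_mod_orderOf, ← hz.eq_orderOf,
      show ((j : ℕ) + 1) * (((k : ℕ) + 1) * l k) % (2 * m + 1) = ((j : ℕ) + 1) % (2 * m + 1) by
        have := Nat.ModEq.mul_left ((j : ℕ) + 1) (hl k)
        rwa [mul_one] at this,
      hz.eq_orderOf, pow_mod_orderOf]
  simp only [mul_comm (m + 1), mul_comm m, pow_mul]
  set w := z ^ ((j : ℕ) + 1)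
  set v := w ^ ((k : ℕ) + 1)
  have hv : v - 1 ≠ 0 := by
    intro h
    rw [sub_eq_zero] at h
    rw [h, one_pow] at hvl
    exact hw hvl.symm
  have g := mul_geom_sum v (l k)
  rw [hvl] at g
  rw [← mul_div_assoc, div_eq_iff hv]
  linear_combination -w ^ m * (1 + v) * g

theorem sinProd_ne_zero {K : Type*} [Field K] {m : ℕ} {z : K}
    (hz : IsPrimitiveRoot z (2 * m + 1)) : sinProd m z ≠ 0 := by
  refine prod_ne_zero_iff.mpr fun j _ => ?_
  have hw : (z ^ ((j : ℕ) + 1)) ≠ 1 := by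
    rw [Ne, hz.pow_eq_one_iff_dvd]
    intro h
    have := Nat.le_of_dvd (by omega) h
    omega
  rw [show z ^ ((m + 1) * ((j : ℕ) + 1)) - z ^ (m * ((j : ℕ) + 1)) =
    z ^ (m * ((j : ℕ) + 1)) * (z ^ ((j : ℕ) + 1) - 1) by ring]
  exact mul_ne_zero (pow_ne_zero _ (hz.ne_zero (by omega))) (sub_ne_zero.mpr hw)

/-! ### Galois action and reduction modulo `p` -/

section Cyclotomic

variable {K : Type} [Field K] [NumberField K] {m : ℕ} {ζ : K}

/-- An automorphism multiplies the half-sine product and both permanents by one common sign. -/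
theorem galois_sign (hζ : IsPrimitiveRoot ζ (2 * m + 1)) (σ : Gal(K/ℚ)) :
    ∃ ε : K, ε * ε = 1 ∧ σ (sinProd m ζ) = ε * sinProd m ζ ∧
      σ (tanMat m ζ).permanent = ε * (tanMat m ζ).permanent ∧
      σ (cotMat m ζ).permanent = ε * (cotMat m ζ).permanent := by
  obtain ⟨ε, hε, h⟩ := odd_sign (K := K) m (hζ.autToPow ℚ σ)
  set a : (ZMod (2 * m + 1))ˣ := hζ.autToPow ℚ σ with ha
  have hσ : σ ζ = ζ ^ (a : ZMod (2 * m + 1)).val := (hζ.autToPow_spec ℚ σ).symm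
  set ψ := AddChar.zmodChar (2 * m + 1) hζ.pow_eq_one with hψ
  have hψn : ∀ i : ℕ, ψ (i : ZMod (2 * m + 1)) = ζ ^ i := fun i =>
    AddChar.zmodChar_apply' hζ.pow_eq_one i
  have hσn : ∀ i : ℕ, σ (ζ ^ i) = ψ (a * (i : ZMod (2 * m + 1))) := by
    intro i
    rw [map_pow, hσ, ← pow_mul, ← hψn]
    simp
  have hnz : ∀ x, ψ x + 1 ≠ 0 := by
    intro x
    refine add_one_ne_zero_of_pow (m := m) ?_
    rw [AddChar.zmodChar_apply, ← pow_mul', pow_mul, hζ.pow_eq_one, one_pow]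
  have hψ0 : ∀ x, ψ x ≠ 0 := fun x => by
    rw [AddChar.zmodChar_apply]; exact pow_ne_zero _ (hζ.ne_zero (by omega))
  have hneg : ∀ x, ψ (-x) = (ψ x)⁻¹ := fun x => AddChar.map_neg_eq_inv ψ x
  have hodd : ∀ x, (ψ (-x) - 1) / (ψ (-x) + 1) = -((ψ x - 1) / (ψ x + 1)) := by
    intro x
    have h1 := hnz x
    have h2 : 1 + ψ x ≠ 0 := by rwa [add_comm]
    have h3 := hψ0 x
    have h4 := hnz (-x)
    rw [hneg] at h4 ⊢
    rw [← neg_div, div_eq_div_iff h4 h1]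
    field_simp
    ring
  -- This makes `s(x) = ψ((m+1)x) - ψ(mx)` an odd function of `x`.
  have hmm : ((m : ZMod (2 * m + 1)) + 1) = -m := by
    have := ZMod.natCast_self (2 * m + 1)
    push_cast at this
    linear_combination this
  refine ⟨ε, hε, ?_, ?_, ?_⟩
  · have := (h (fun x => ψ ((m + 1) * x) - ψ (m * x)) (fun x => by
      simp only [hmm, mul_neg, neg_mul, neg_neg]; ring)).1
    have e1 : sinProd m ζ = ∏ j : Fin m, (ψ ((m + 1) * ((j : ℕ) + 1)) - ψ (m * ((j : ℕ) + 1))) := by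
      refine prod_congr rfl fun j _ => ?_
      rw [← hψn, ← hψn]; push_cast; rfl
    rw [e1, ← this, ← e1, sinProd, map_prod]
    refine prod_congr rfl fun j _ => ?_
    rw [map_sub, hσn, hσn]
    push_cast
    congr 2 <;> ring
  · have := (h (fun x => (ψ x - 1) / (ψ x + 1)) hodd).2
    have e1 : tanMat m ζ = Matrix.of fun j k : Fin m =>
        (ψ (((j : ℕ) + 1) * ((k : ℕ) + 1)) - 1) / (ψ (((j : ℕ) + 1) * ((k : ℕ) + 1)) + 1) := by
      ext j k
      simp only [tanMat, Matrix.of_apply, ← hψn]; push_cast; rfl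
    rw [e1, ← this, ← e1]
    refine (map_permanent (σ : K →+* K) _).trans ?_
    congr 1
    ext j k
    simp only [tanMat, Matrix.map_apply, Matrix.of_apply, RingHom.coe_coe, map_div₀, map_sub,
      map_add, map_one, hσn]
    push_cast; rfl
  · have := (h (fun x => (ψ x + 1) / (ψ x - 1)) (fun x => by
      have := congrArg (·⁻¹) (hodd x)
      simpa only [inv_neg, inv_div] using this)).2
    have e1 : cotMat m ζ = Matrix.of fun j k : Fin m =>
        (ψ (((j : ℕ) + 1) * ((k : ℕ) + 1)) + 1) / (ψ (((j : ℕ) + 1) * ((k : ℕ) + 1)) - 1) := by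
      ext j k
      simp only [cotMat, Matrix.of_apply, ← hψn]; push_cast; rfl
    rw [e1, ← this, ← e1]
    refine (map_permanent (σ : K →+* K) _).trans ?_
    congr 1
    ext j k
    simp only [cotMat, Matrix.map_apply, Matrix.of_apply, RingHom.coe_coe, map_div₀, map_sub,
      map_add, map_one, hσn]
    push_cast; rfl

theorem tanQuot_int [IsGalois ℚ K] (hζ : IsPrimitiveRoot ζ (2 * m + 1)) :
    ∃ z : ℤ, (tanQuot m ζ).permanent = z := by
  refine integral_fixed _ ?_ fun σ => ?_
  · rw [show ζ = algebraMap (NumberField.RingOfIntegers K) K hζ.toInteger from rfl,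
      ← map_tanQuot, ← map_permanent]
    exact NumberField.RingOfIntegers.isIntegral_coe _
  · obtain ⟨ε, hε, hs, ht, -⟩ := galois_sign hζ σ
    rw [tanMat_permanent hζ.pow_eq_one, map_mul, hs, ← mul_assoc] at ht
    refine mul_left_cancel₀ (mul_ne_zero ?_ (sinProd_ne_zero hζ)) ht
    rintro rfl
    simp at hε

theorem cotQuot_int [IsGalois ℚ K] (hζ : IsPrimitiveRoot ζ (2 * m + 1)) (l : Fin m → ℕ)
    (hl : ∀ k : Fin m, ((k : ℕ) + 1) * l k ≡ 1 [MOD (2 * m + 1)]) :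
    ∃ z : ℤ, (cotQuot m l ζ).permanent = z := by
  refine integral_fixed _ ?_ fun σ => ?_
  · rw [show ζ = algebraMap (NumberField.RingOfIntegers K) K hζ.toInteger from rfl,
      ← map_cotQuot, ← map_permanent]
    exact NumberField.RingOfIntegers.isIntegral_coe _
  · obtain ⟨ε, hε, hs, -, hc⟩ := galois_sign hζ σ
    rw [← cotMat_permanent hζ l hl, map_mul, hs, hc]
    linear_combination (sinProd m ζ * (cotMat m ζ).permanent) * hε

theorem exists_reduction_root (hζ : IsPrimitiveRoot ζ (2 * m + 1)) (hp : (2 * m + 1).Prime) :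
    ∃ (κ : Type) (_ : Field κ) (_ : CharP κ (2 * m + 1))
      (f : NumberField.RingOfIntegers K →+* κ), f hζ.toInteger = 1 := by
  have : Fact (2 * m + 1).Prime := ⟨hp⟩
  obtain ⟨κ, _, _, ⟨f⟩⟩ := exists_reduction K (2 * m + 1)
  refine ⟨κ, inferInstance, inferInstance, f, ?_⟩
  have h : (f hζ.toInteger) ^ (2 * m + 1) = 1 := by
    rw [← map_pow, hζ.toInteger_isPrimitiveRoot.pow_eq_one, map_one]
  -- In characteristic `p`, `(x - 1)^p = x^p - 1`.
  rw [← sub_eq_zero]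
  refine eq_zero_of_pow_eq_zero (n := 2 * m + 1) ?_
  rw [sub_pow_char, h, one_pow, sub_self]

theorem tanQuot_mod (hζ : IsPrimitiveRoot ζ (2 * m + 1)) (hp : (2 * m + 1).Prime) (z : ℤ)
    (hz : (tanQuot m ζ).permanent = z) :
    z ≡ ((m.factorial * (m.factorial * (m + 1) ^ m) : ℕ) : ℤ) [ZMOD ((2 * m + 1 : ℕ) : ℤ)] := by
  obtain ⟨κ, _, _, f, hf⟩ := exists_reduction_root hζ hp
  have h : (tanQuot m hζ.toInteger).permanent = z := by
    apply NumberField.RingOfIntegers.coe_injective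
    rw [map_permanent, map_tanQuot, map_intCast]
    exact hz
  apply_fun f at h
  rw [map_permanent, map_tanQuot, map_intCast, hf, tanQuot_one_permanent] at h
  rw [← CharP.intCast_eq_intCast κ, ← h]
  simp

theorem cotQuot_mod (hζ : IsPrimitiveRoot ζ (2 * m + 1)) (hp : (2 * m + 1).Prime)
    (l : Fin m → ℕ) (z : ℤ) (hz : (cotQuot m l ζ).permanent = z) :
    z ≡ ((m.factorial * (2 ^ m * ∏ k, l k) : ℕ) : ℤ) [ZMOD ((2 * m + 1 : ℕ) : ℤ)] := by
  obtain ⟨κ, _, _, f, hf⟩ := exists_reduction_root hζ hp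
  have h : (cotQuot m l hζ.toInteger).permanent = z := by
    apply NumberField.RingOfIntegers.coe_injective
    rw [map_permanent, map_cotQuot, map_intCast]
    exact hz
  apply_fun f at h
  rw [map_permanent, map_cotQuot, map_intCast, hf, cotQuot_one_permanent] at h
  rw [← CharP.intCast_eq_intCast κ, ← h]
  simp

end Cyclotomic

/-! ### Trigonometric values -/

/-- The root of unity `exp(2πi/(2m+1))`. -/
noncomputable def rootC (m : ℕ) : ℂ := Complex.exp (2 * Real.pi * Complex.I / ((2 * m + 1 : ℕ) : ℂ))

theorem rootC_prim (m : ℕ) : IsPrimitiveRoot (rootC m) (2 * m + 1) :=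
  Complex.isPrimitiveRoot_exp _ (by omega)

theorem rootC_pow (m x : ℕ) : rootC m ^ x =
    Complex.exp (((Real.pi * x / ((2 * m + 1 : ℕ) : ℝ) : ℝ) : ℂ) * Complex.I) ^ 2 := by
  rw [rootC, ← Complex.exp_nat_mul, ← Complex.exp_nat_mul]
  congr 1
  push_cast
  ring

theorem exp_facts (t : ℝ) :
    Complex.exp ((t : ℂ) * Complex.I) ^ 2 - 1 =
      Complex.exp ((t : ℂ) * Complex.I) * (2 * Complex.I * (Real.sin t : ℂ)) ∧
    Complex.exp ((t : ℂ) * Complex.I) ^ 2 + 1 =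
      Complex.exp ((t : ℂ) * Complex.I) * (2 * (Real.cos t : ℂ)) := by
  have h1 : (Complex.cos t) ^ 2 + (Complex.sin t) ^ 2 = 1 := by
    rw [add_comm]; exact Complex.sin_sq_add_cos_sq _
  rw [Complex.exp_mul_I, Complex.ofReal_sin, Complex.ofReal_cos]
  constructor
  · linear_combination h1 - (Complex.sin t) ^ 2 * Complex.I_sq
  · linear_combination -h1 + (Complex.sin t) ^ 2 * Complex.I_sq

/-- The root `rootC m ^ (m + 1)` is the square root `-exp(πi/(2m+1))` of `rootC m`, and
`rootC m ^ m` is its inverse; this is the source of the sign `(-1)^x`. -/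
theorem rootC_sub (m x : ℕ) :
    rootC m ^ ((m + 1) * x) - rootC m ^ (m * x) =
      (-1) ^ x * (Complex.I * ((2 * Real.sin (Real.pi * x / ((2 * m + 1 : ℕ) : ℝ)) : ℝ) : ℂ)) := by
  have hn : ((2 * m + 1 : ℕ) : ℂ) ≠ 0 := by exact_mod_cast (by omega : 2 * m + 1 ≠ 0)
  have hinv := mul_inv_cancel₀ hn
  set t : ℝ := Real.pi * x / ((2 * m + 1 : ℕ) : ℝ) with ht
  have hpi : ((-1 : ℂ)) ^ x = Complex.exp (x * (Real.pi * Complex.I)) := by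
    rw [Complex.exp_nat_mul, Complex.exp_pi_mul_I]
  have h1 : rootC m ^ ((m + 1) * x) = (-1) ^ x * Complex.exp ((t : ℂ) * Complex.I) := by
    rw [hpi, ← Complex.exp_add, rootC, ← Complex.exp_nat_mul]
    congr 1
    rw [ht]; push_cast at hinv ⊢
    linear_combination (Real.pi * x * Complex.I) * hinv
  have h2 : rootC m ^ (m * x) = (-1) ^ x * Complex.exp (-(t : ℂ) * Complex.I) := by
    rw [hpi, ← Complex.exp_add, rootC, ← Complex.exp_nat_mul]
    congr 1
    rw [ht]; push_cast at hinv ⊢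
    linear_combination (Real.pi * x * Complex.I) * hinv
  rw [h1, h2, Complex.exp_mul_I, Complex.exp_mul_I, Complex.cos_neg, Complex.sin_neg]
  push_cast
  ring

theorem norm_one_sub_rootC (m x : ℕ) (hx : x ≤ 2 * m + 1) :
    ‖1 - rootC m ^ x‖ = 2 * Real.sin (Real.pi * x / ((2 * m + 1 : ℕ) : ℝ)) := by
  rw [norm_sub_rev, rootC_pow, (exp_facts _).1, norm_mul, Complex.norm_exp_ofReal_mul_I]
  have h : 0 ≤ Real.sin (Real.pi * x / ((2 * m + 1 : ℕ) : ℝ)) := by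
    apply Real.sin_nonneg_of_nonneg_of_le_pi
    · positivity
    · rw [div_le_iff₀ (by positivity)]
      gcongr
  simp only [norm_mul, Complex.norm_I, Complex.norm_real, Real.norm_of_nonneg h]
  simp

/-- The square of the product is `∏_{0<j<n} |1 - ζ^j| = n`, since `sin(π - t) = sin t`. -/
theorem prod_two_sin (m : ℕ) :
    ∏ j : Fin m, (2 * Real.sin (Real.pi * (((j : ℕ) + 1 : ℕ) : ℝ) / ((2 * m + 1 : ℕ) : ℝ))) =
      Real.sqrt ((2 * m + 1 : ℕ) : ℝ) := by
  rw [Fin.prod_univ_eq_prod_range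
    (fun j => 2 * Real.sin (Real.pi * ((j + 1 : ℕ) : ℝ) / ((2 * m + 1 : ℕ) : ℝ))) m]
  have h := congrArg norm (rootC_prim m).prod_one_sub_pow_eq_order
  rw [norm_prod, two_mul m, prod_range_add] at h
  have h1 : ∏ j ∈ range m, ‖1 - rootC m ^ (j + 1)‖ =
      ∏ j ∈ range m, (2 * Real.sin (Real.pi * ((j + 1 : ℕ) : ℝ) / ((2 * m + 1 : ℕ) : ℝ))) :=
    prod_congr rfl fun j hj => norm_one_sub_rootC m _ (by have := mem_range.mp hj; omega)
  have h2 : ∏ j ∈ range m, ‖1 - rootC m ^ (m + j + 1)‖ =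
      ∏ j ∈ range m, (2 * Real.sin (Real.pi * ((j + 1 : ℕ) : ℝ) / ((2 * m + 1 : ℕ) : ℝ))) := by
    rw [← prod_range_reflect]
    refine prod_congr rfl fun j hj => ?_
    have hj := mem_range.mp hj
    rw [norm_one_sub_rootC m _ (by omega), ← Real.sin_pi_sub]
    congr 2
    have : m + (m - 1 - j) + 1 = 2 * m - j := by omega
    rw [this, Nat.cast_sub (by omega)]
    push_cast
    field_simp
    ring
  rw [h1, h2, ← sq] at h
  rw [eq_comm, Real.sqrt_eq_iff_mul_self_eq_of_pos, ← sq, h]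
  · rw [show ((m + m : ℕ) : ℂ) + 1 = ((2 * m + 1 : ℕ) : ℂ) by push_cast; ring,
      Complex.norm_natCast]
  · refine prod_pos fun j hj => ?_
    have hj := mem_range.mp hj
    have : 0 < Real.sin (Real.pi * ((j + 1 : ℕ) : ℝ) / ((2 * m + 1 : ℕ) : ℝ)) := by
      apply Real.sin_pos_of_pos_of_lt_pi
      · positivity
      · rw [div_lt_iff₀ (by positivity)]
        gcongr
        omega
    positivity

theorem sinProd_rootC (m : ℕ) : sinProd m (rootC m) =
    (-1) ^ (m * (m + 1) / 2) * Complex.I ^ m * (Real.sqrt ((2 * m + 1 : ℕ) : ℝ) : ℂ) := by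
  have hsum : ∑ j : Fin m, ((j : ℕ) + 1) = m * (m + 1) / 2 := by
    have h := sum_range_succ' (fun j => j) m
    rw [sum_range_id, Nat.add_sub_cancel, add_zero] at h
    rw [Fin.sum_univ_eq_sum_range (fun j => j + 1) m, ← h, mul_comm]
  rw [sinProd, ← prod_two_sin, Complex.ofReal_prod, ← hsum, ← prod_pow_eq_pow_sum,
    show Complex.I ^ m = ∏ _j : Fin m, Complex.I by simp, ← prod_mul_distrib, ← prod_mul_distrib]
  refine prod_congr rfl fun j _ => ?_
  rw [rootC_sub, mul_assoc]

theorem tanMat_rootC (m : ℕ) : (tanMat m (rootC m)).permanent = Complex.I ^ m *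
    (((Matrix.of fun j k : Fin m => Real.tan (Real.pi *
      ((((j : ℕ) + 1) * ((k : ℕ) + 1) : ℕ) : ℝ) / ((2 * m + 1 : ℕ) : ℝ))).permanent : ℝ) : ℂ) := by
  have h := map_permanent Complex.ofRealHom (Matrix.of fun j k : Fin m => Real.tan (Real.pi *
      ((((j : ℕ) + 1) * ((k : ℕ) + 1) : ℕ) : ℝ) / ((2 * m + 1 : ℕ) : ℝ)))
  rw [Complex.ofRealHom_eq_coe] at h
  rw [h, show Complex.I ^ m = ∏ _j : Fin m, Complex.I by simp, ← permanent_row_scale]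
  congr 1
  ext j k
  simp only [tanMat, Matrix.of_apply, Matrix.map_apply, rootC_pow, Complex.ofRealHom_eq_coe,
    Real.tan_eq_sin_div_cos]
  rw [(exp_facts _).1, (exp_facts _).2, Complex.ofReal_div (Real.sin _), mul_div_mul_left _ _ (Complex.exp_ne_zero _), mul_assoc, mul_div_mul_left _ _ two_ne_zero,
    mul_div_assoc]

theorem cotMat_rootC (m : ℕ) : (cotMat m (rootC m)).permanent = (-Complex.I) ^ m *
    (((Matrix.of fun j k : Fin m => Real.cos (Real.pi *
      ((((j : ℕ) + 1) * ((k : ℕ) + 1) : ℕ) : ℝ) / ((2 * m + 1 : ℕ) : ℝ)) / Real.sin (Real.pi *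
      ((((j : ℕ) + 1) * ((k : ℕ) + 1) : ℕ) : ℝ) / ((2 * m + 1 : ℕ) : ℝ))).permanent : ℝ) : ℂ) := by
  have h := map_permanent Complex.ofRealHom (Matrix.of fun j k : Fin m => Real.cos (Real.pi *
      ((((j : ℕ) + 1) * ((k : ℕ) + 1) : ℕ) : ℝ) / ((2 * m + 1 : ℕ) : ℝ)) / Real.sin (Real.pi *
      ((((j : ℕ) + 1) * ((k : ℕ) + 1) : ℕ) : ℝ) / ((2 * m + 1 : ℕ) : ℝ)))
  rw [Complex.ofRealHom_eq_coe] at h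
  rw [h, show (-Complex.I) ^ m = ∏ _j : Fin m, (-Complex.I) by simp, ← permanent_row_scale]
  congr 1
  ext j k
  simp only [cotMat, Matrix.of_apply, Matrix.map_apply, rootC_pow, Complex.ofRealHom_eq_coe]
  rw [(exp_facts _).1, (exp_facts _).2, Complex.ofReal_div (Real.cos _), mul_div_mul_left _ _ (Complex.exp_ne_zero _), mul_assoc, mul_div_mul_left _ _ two_ne_zero,
    ← div_div, div_right_comm, div_eq_mul_inv _ Complex.I, Complex.inv_I, mul_comm]

/-- A Galois number field with a primitive root of unity that an embedding sends to `rootC m`. -/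
theorem exists_cyclotomic_model (m : ℕ) :
    ∃ (K : Type) (_ : Field K) (_ : NumberField K) (_ : IsGalois ℚ K) (ζ : K) (ι : K →+* ℂ),
      IsPrimitiveRoot ζ (2 * m + 1) ∧ ι ζ = rootC m := by
  let K := CyclotomicField (2 * m + 1) ℚ
  have : NeZero (((2 * m + 1 : ℕ)) : ℚ) := ⟨by positivity⟩
  have : IsCyclotomicExtension {2 * m + 1} ℚ K := CyclotomicField.isCyclotomicExtension _ _
  have hζ := IsCyclotomicExtension.zeta_spec (2 * m + 1) ℚ K
  let ι : K →ₐ[ℚ] ℂ := IsAlgClosed.lift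
  have hι := hζ.map_of_injective (f := ι) ι.injective
  obtain ⟨i, -, hi⟩ := hι.eq_pow_of_pow_eq_one (rootC_prim m).pow_eq_one
  refine ⟨K, inferInstance, inferInstance, IsCyclotomicExtension.isGalois {2 * m + 1} ℚ K,
    IsCyclotomicExtension.zeta (2 * m + 1) ℚ K ^ i, ι, ?_, ?_⟩
  · refine IsPrimitiveRoot.of_map_of_injective (f := ι) ?_ ι.injective
    rw [map_pow, hi]
    exact rootC_prim m
  · exact (map_pow ι _ i).trans hi

theorem tan_core (m : ℕ) : ∃ z : ℤ,
    (Real.sqrt ((2 * m + 1 : ℕ) : ℝ))⁻¹ * (Matrix.of fun j k : Fin m => Real.tan (Real.pi *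
      ((((j : ℕ) + 1) * ((k : ℕ) + 1) : ℕ) : ℝ) / ((2 * m + 1 : ℕ) : ℝ))).permanent =
      (((-1) ^ (m * (m + 1) / 2) * z : ℤ) : ℝ) ∧
    ((2 * m + 1).Prime →
      z ≡ ((m.factorial * (m.factorial * (m + 1) ^ m) : ℕ) : ℤ) [ZMOD ((2 * m + 1 : ℕ) : ℤ)]) := by
  obtain ⟨K, _, _, _, ζ, ι, hζ, hι⟩ := exists_cyclotomic_model m
  obtain ⟨z, hz⟩ := tanQuot_int hζ
  refine ⟨z, ?_, fun hp => tanQuot_mod hζ hp z hz⟩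
  have h := congrArg ι hz
  rw [map_permanent, map_tanQuot, hι, map_intCast] at h
  have h2 := tanMat_permanent (rootC_prim m).pow_eq_one
  rw [h, tanMat_rootC, sinProd_rootC, mul_comm _ (Complex.I ^ m), mul_assoc, mul_assoc,
    mul_right_inj' (pow_ne_zero _ Complex.I_ne_zero)] at h2
  have h3 : (Matrix.of fun j k : Fin m => Real.tan (Real.pi *
      ((((j : ℕ) + 1) * ((k : ℕ) + 1) : ℕ) : ℝ) / ((2 * m + 1 : ℕ) : ℝ))).permanent =
      (-1) ^ (m * (m + 1) / 2) * (Real.sqrt ((2 * m + 1 : ℕ) : ℝ) * (z : ℝ)) := by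
    exact_mod_cast h2
  have hs : Real.sqrt ((2 * m + 1 : ℕ) : ℝ) ≠ 0 := by positivity
  rw [h3]
  push_cast at hs ⊢
  field_simp

theorem cot_core (m : ℕ) (l : Fin m → ℕ)
    (hl : ∀ k : Fin m, ((k : ℕ) + 1) * l k ≡ 1 [MOD (2 * m + 1)]) : ∃ z : ℤ,
    Real.sqrt ((2 * m + 1 : ℕ) : ℝ) * (Matrix.of fun j k : Fin m => Real.cos (Real.pi *
      ((((j : ℕ) + 1) * ((k : ℕ) + 1) : ℕ) : ℝ) / ((2 * m + 1 : ℕ) : ℝ)) / Real.sin (Real.pi *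
      ((((j : ℕ) + 1) * ((k : ℕ) + 1) : ℕ) : ℝ) / ((2 * m + 1 : ℕ) : ℝ))).permanent =
      (((-1) ^ (m * (m + 1) / 2) * z : ℤ) : ℝ) ∧
    ((2 * m + 1).Prime →
      z ≡ ((m.factorial * (2 ^ m * ∏ k, l k) : ℕ) : ℤ) [ZMOD ((2 * m + 1 : ℕ) : ℤ)]) := by
  obtain ⟨K, _, _, _, ζ, ι, hζ, hι⟩ := exists_cyclotomic_model m
  obtain ⟨z, hz⟩ := cotQuot_int hζ l hl
  refine ⟨z, ?_, fun hp => cotQuot_mod hζ hp l z hz⟩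
  have h := congrArg ι hz
  rw [map_permanent, map_cotQuot, hι, map_intCast] at h
  have h2 := cotMat_permanent (rootC_prim m) l hl
  have hI : Complex.I ^ m * (-Complex.I) ^ m = 1 := by
    rw [← mul_pow, mul_neg, Complex.I_mul_I, neg_neg, one_pow]
  rw [h, cotMat_rootC, sinProd_rootC] at h2
  have hδ : ((-1 : ℂ) ^ (m * (m + 1) / 2)) * (-1) ^ (m * (m + 1) / 2) = 1 := by
    rw [← mul_pow]; simp
  have h3 : ((Real.sqrt ((2 * m + 1 : ℕ) : ℝ) : ℝ) : ℂ) *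
      (((Matrix.of fun j k : Fin m => Real.cos (Real.pi *
      ((((j : ℕ) + 1) * ((k : ℕ) + 1) : ℕ) : ℝ) / ((2 * m + 1 : ℕ) : ℝ)) / Real.sin (Real.pi *
      ((((j : ℕ) + 1) * ((k : ℕ) + 1) : ℕ) : ℝ) / ((2 * m + 1 : ℕ) : ℝ))).permanent : ℝ) : ℂ) =
      (-1) ^ (m * (m + 1) / 2) * (z : ℂ) := by
    rw [← h2]
    generalize (((Matrix.of fun j k : Fin m => _ : Matrix (Fin m) (Fin m) ℝ).permanent : ℝ) : ℂ) = X
    generalize ((Real.sqrt ((2 * m + 1 : ℕ) : ℝ) : ℝ) : ℂ) = s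
    generalize Complex.I ^ m = u at *
    generalize (-Complex.I) ^ m = v at *
    generalize (-1 : ℂ) ^ (m * (m + 1) / 2) = δ at *
    linear_combination -s * X * hI - s * X * u * v * hδ
  exact_mod_cast h3

/-! ### Congruences modulo `p = 2m + 1` -/

/-- Second supplementary law: `m(m+1)/2 = (p² - 1)/8` for `p = 2m + 1`. -/
theorem two_pow_mod (m : ℕ) (hp : (2 * m + 1).Prime) :
    (2 : ZMod (2 * m + 1)) ^ m = (-1) ^ (m * (m + 1) / 2) := by
  have : Fact (2 * m + 1).Prime := ⟨hp⟩
  have h := legendreSym.eq_pow (2 * m + 1) 2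
  rw [legendreSym.at_two (by omega), ZMod.χ₈_nat_eq_if_mod_eight,
    show (2 * m + 1) / 2 = m by omega] at h
  rw [if_neg (by omega)] at h
  have h4 : m = 4 * (m / 4) + m % 4 := by omega
  have hr : m % 4 < 4 := Nat.mod_lt _ (by norm_num)
  have e : m * (m + 1) / 2 = 2 * ((m / 4) * (4 * (m / 4) + 2 * (m % 4) + 1)) +
      (m % 4) * (m % 4 + 1) / 2 := by
    generalize m / 4 = q at *
    generalize m % 4 = r at *
    subst h4
    rw [show (4 * q + r) * (4 * q + r + 1) =
      r * (r + 1) + 2 * (2 * (q * (4 * q + 2 * r + 1))) by ring, Nat.add_mul_div_left _ _ two_pos]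
    ring
  -- Both sides depend only on `m` modulo 4.
  rw [e, pow_add, pow_mul, neg_one_sq, one_pow, one_mul]
  have h' : (2 : ZMod (2 * m + 1)) ^ m = (((if (2 * m + 1) % 8 = 1 ∨ (2 * m + 1) % 8 = 7
    then 1 else -1 : ℤ)) : ZMod (2 * m + 1)) := by rw [h]; simp
  rw [h']
  have : m % 4 = 0 ∨ m % 4 = 1 ∨ m % 4 = 2 ∨ m % 4 = 3 := by omega
  rcases this with h5 | h5 | h5 | h5 <;> rw [h5]
  · rw [if_pos (by omega)]; norm_num
  · rw [if_neg (by omega)]; norm_num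
  · rw [if_neg (by omega)]; norm_num
  · rw [if_pos (by omega)]; norm_num

/-- Wilson's theorem, with the factors `m + 1, …, 2m` of `(2m)!` paired with `-m, …, -1`. -/
theorem factorial_sq_mod (m : ℕ) (hp : (2 * m + 1).Prime) :
    (m.factorial : ZMod (2 * m + 1)) * m.factorial = (-1) ^ (m + 1) := by
  have : Fact (2 * m + 1).Prime := ⟨hp⟩
  have h := ZMod.wilsons_lemma (2 * m + 1)
  have h1 : (2 * m).factorial = m.factorial * ∏ j ∈ range m, (m + (m - 1 - j) + 1) := by
    rw [← prod_range_add_one_eq_factorial, two_mul m, prod_range_add,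
      prod_range_add_one_eq_factorial, prod_range_reflect (fun j => m + j + 1)]
  rw [Nat.add_sub_cancel, h1] at h
  have h2 : ((∏ j ∈ range m, (m + (m - 1 - j) + 1) : ℕ) : ZMod (2 * m + 1)) =
      (-1) ^ m * m.factorial := by
    rw [← prod_range_add_one_eq_factorial]
    push_cast
    rw [show (-1 : ZMod (2 * m + 1)) ^ m = ∏ _j ∈ range m, (-1 : ZMod (2 * m + 1)) by simp,
      ← prod_mul_distrib]
    refine prod_congr rfl fun j hj => ?_
    have hj := mem_range.mp hj
    have h3 := ZMod.natCast_self (2 * m + 1)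
    have h4 : ((m + (m - 1 - j) + 1 + (j + 1) : ℕ) : ZMod (2 * m + 1)) = 0 := by
      rw [show m + (m - 1 - j) + 1 + (j + 1) = 2 * m + 1 by omega, h3]
    push_cast at h4
    linear_combination h4
  rw [Nat.cast_mul, h2] at h
  have hδ : ((-1 : ZMod (2 * m + 1)) ^ m) * (-1) ^ m = 1 := by
    rw [← mul_pow]; simp
  rw [pow_succ]
  linear_combination (-1) ^ m * h - (m.factorial : ZMod (2 * m + 1)) ^ 2 * hδ

theorem tan_final_mod (m : ℕ) (hp : (2 * m + 1).Prime) (z : ℤ)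
    (hz : z ≡ ((m.factorial * (m.factorial * (m + 1) ^ m) : ℕ) : ℤ) [ZMOD ((2 * m + 1 : ℕ) : ℤ)]) :
    (-1) ^ (m * (m + 1) / 2) * z ≡ (-1) ^ (m + 1) [ZMOD ((2 * m + 1 : ℕ) : ℤ)] := by
  rw [← ZMod.intCast_eq_intCast_iff] at hz ⊢
  push_cast at hz ⊢
  have hf := factorial_sq_mod m hp
  have h2 : (2 : ZMod (2 * m + 1)) ^ m * ((m : ZMod (2 * m + 1)) + 1) ^ m = 1 := by
    rw [← mul_pow]
    have h3 := ZMod.natCast_self (2 * m + 1)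
    push_cast at h3
    rw [show (2 : ZMod (2 * m + 1)) * (m + 1) = 1 by linear_combination h3, one_pow]
  rw [two_pow_mod m hp] at h2
  rw [hz]
  linear_combination hf + (m.factorial : ZMod (2 * m + 1)) ^ 2 * h2

theorem cot_final_mod (m : ℕ) (hp : (2 * m + 1).Prime) (l : Fin m → ℕ)
    (hl : ∀ k : Fin m, ((k : ℕ) + 1) * l k ≡ 1 [MOD (2 * m + 1)]) (z : ℤ)
    (hz : z ≡ ((m.factorial * (2 ^ m * ∏ k, l k) : ℕ) : ℤ) [ZMOD ((2 * m + 1 : ℕ) : ℤ)]) :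
    (-1) ^ (m * (m + 1) / 2) * z ≡ 1 [ZMOD ((2 * m + 1 : ℕ) : ℤ)] := by
  rw [← ZMod.intCast_eq_intCast_iff] at hz ⊢
  push_cast at hz ⊢
  have h1 : (m.factorial : ZMod (2 * m + 1)) * ∏ k, (l k : ZMod (2 * m + 1)) = 1 := by
    rw [← prod_fin_succ_cast, ← prod_mul_distrib]
    refine prod_eq_one fun k _ => ?_
    have := (ZMod.natCast_eq_natCast_iff _ _ _).mpr (hl k)
    push_cast at this
    exact this
  have hδ : ((-1 : ZMod (2 * m + 1)) ^ (m * (m + 1) / 2)) * (-1) ^ (m * (m + 1) / 2) = 1 := by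
    rw [← mul_pow]; simp
  rw [hz, two_pow_mod m hp]
  linear_combination h1 + (m.factorial : ZMod (2 * m + 1)) * (∏ k, (l k : ZMod (2 * m + 1))) * hδ

theorem exists_inverses (m : ℕ) (hp : (2 * m + 1).Prime) :
    ∃ l : Fin m → ℕ, ∀ k : Fin m, ((k : ℕ) + 1) * l k ≡ 1 [MOD (2 * m + 1)] := by
  have h : ∀ k : Fin m, ∃ x : ℕ, ((k : ℕ) + 1) * x ≡ 1 [MOD (2 * m + 1)] := fun k => by
    have hc : Nat.Coprime ((k : ℕ) + 1) (2 * m + 1) :=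
      (Nat.coprime_of_lt_prime (by omega) (by omega) hp).symm
    obtain ⟨x, hx⟩ := Nat.exists_mul_mod_eq_one_of_coprime hc (by have := hp.two_le; omega)
    exact ⟨x, by rw [Nat.ModEq, hx.2, Nat.mod_eq_of_lt hp.one_lt]⟩
  exact ⟨fun k => (h k).choose, fun k => (h k).choose_spec⟩

/-- For every odd `n > 1`, the real number
`t_n := (1/√n) * per [tan (πjk/n)]_{1 ≤ j,k ≤ (n-1)/2}` is a rational integer;
for every odd prime `p`, the real number
`t_p' := √p * per [cot (πjk/p)]_{1 ≤ j,k ≤ (p-1)/2}` is a rational integer;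
moreover for every odd prime `p` these integers satisfy
`t_p ≡ (-1)^((p+1)/2) (mod p)` and `t_p' ≡ 1 (mod p)`. -/
theorem permanent_tan_cot_pi_mul_div :
    (∀ n : ℕ, 1 < n → Odd n → ∃ m : ℤ,
      (Real.sqrt n)⁻¹ *
        (Matrix.of fun j k : Fin ((n - 1) / 2) =>
          Real.tan (Real.pi * ((((j : ℕ) + 1) * ((k : ℕ) + 1) : ℕ) : ℝ) / (n : ℝ))).permanent
        = (m : ℝ)) ∧
    (∀ p : ℕ, p.Prime → Odd p → ∃ m : ℤ,
      Real.sqrt p *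
        (Matrix.of fun j k : Fin ((p - 1) / 2) =>
          Real.cos (Real.pi * ((((j : ℕ) + 1) * ((k : ℕ) + 1) : ℕ) : ℝ) / (p : ℝ)) /
            Real.sin (Real.pi * ((((j : ℕ) + 1) * ((k : ℕ) + 1) : ℕ) : ℝ) / (p : ℝ))).permanent
        = (m : ℝ)) ∧
    (∀ p : ℕ, p.Prime → Odd p → ∀ a b : ℤ,
      ((Real.sqrt p)⁻¹ *
        (Matrix.of fun j k : Fin ((p - 1) / 2) =>
          Real.tan (Real.pi * ((((j : ℕ) + 1) * ((k : ℕ) + 1) : ℕ) : ℝ) / (p : ℝ))).permanent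
        = (a : ℝ)) →
      (Real.sqrt p *
        (Matrix.of fun j k : Fin ((p - 1) / 2) =>
          Real.cos (Real.pi * ((((j : ℕ) + 1) * ((k : ℕ) + 1) : ℕ) : ℝ) / (p : ℝ)) /
            Real.sin (Real.pi * ((((j : ℕ) + 1) * ((k : ℕ) + 1) : ℕ) : ℝ) / (p : ℝ))).permanent
        = (b : ℝ)) →
      a ≡ (-1) ^ ((p + 1) / 2) [ZMOD (p : ℤ)] ∧ b ≡ 1 [ZMOD (p : ℤ)]) := by
  refine ⟨?_, ?_, ?_⟩
  · rintro n - ⟨m, rfl⟩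
    rw [show (2 * m + 1 - 1) / 2 = m by omega]
    obtain ⟨z, hz, -⟩ := tan_core m
    exact ⟨_, hz⟩
  · rintro p hp ⟨m, rfl⟩
    rw [show (2 * m + 1 - 1) / 2 = m by omega]
    obtain ⟨l, hl⟩ := exists_inverses m hp
    obtain ⟨z, hz, -⟩ := cot_core m l hl
    exact ⟨_, hz⟩
  · rintro p hp ⟨m, rfl⟩ a b
    rw [show (2 * m + 1 - 1) / 2 = m by omega, show (2 * m + 1 + 1) / 2 = m + 1 by omega]
    intro ha hb
    obtain ⟨l, hl⟩ := exists_inverses m hp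
    obtain ⟨z, hz, hzm⟩ := tan_core m
    obtain ⟨y, hy, hym⟩ := cot_core m l hl
    rw [hz, Int.cast_inj] at ha
    rw [hy, Int.cast_inj] at hb
    rw [← ha, ← hb]
    exact ⟨tan_final_mod m hp z (hzm hp), cot_final_mod m hp l hl y (hym hp)⟩
end
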